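/- arXiv:1610.00570 — 3 statements merged into one kernel-verified Lean document; each statement's English description precedes it below -/
import Mathlib

section
/- If R is a relative m-ovoid of Q⁻(2n+1,q) with respect to 𝒬, then |R| = m·q·(qⁿ − 1). -/
noncomputable section

open Module

variable {F V : Type*} [Field F] [AddCommGroup V] [Module F V]

/-- `P` is a singular point of the quadratic form `Q`, i.e. a `1`-dimensional subspace
spanned by a nonzero singular vector. -/
def IsSingularPoint (Q : QuadraticForm F V) (P : Submodule F V) : Prop :=
  ∃ v : V, v ≠ 0 ∧ Q v = 0 ∧ P = Submodule.span F {v}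

/-- A subspace is totally singular if `Q` vanishes identically on it. -/
def TotallySingular (Q : QuadraticForm F V) (W : Submodule F V) : Prop :=
  ∀ v ∈ W, Q v = 0

/-- A generator is a totally singular subspace of (vector space) dimension `n`. -/
def IsGenerator (Q : QuadraticForm F V) (n : ℕ) (g : Submodule F V) : Prop :=
  TotallySingular Q g ∧ finrank F g = n

/-- The restriction of `Q` to the subspace `U` is nondegenerate. -/
def NondegOn (Q : QuadraticForm F V) (U : Submodule F V) : Prop :=
  ∀ v ∈ U, Q v = 0 → (∀ w ∈ U, QuadraticMap.polar (⇑Q) v w = 0) → v = 0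

/-- The quadratic form `Q` is nondegenerate. -/
def Nondeg (Q : QuadraticForm F V) : Prop :=
  ∀ v : V, Q v = 0 → (∀ w : V, QuadraticMap.polar (⇑Q) v w = 0) → v = 0

/-- `Q` has Witt index `n`: every totally singular subspace has dimension at most `n`
and some totally singular subspace has dimension `n`. -/
def HasWittIndex (Q : QuadraticForm F V) (n : ℕ) : Prop :=
  (∀ W : Submodule F V, TotallySingular Q W → finrank F W ≤ n) ∧
  ∃ W : Submodule F V, TotallySingular Q W ∧ finrank F W = n

/-- A relative `m`-ovoid with respect to the parabolic section cut out by the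
hyperplane `H`: a set `R` of singular points not contained in `H` such that every
generator not contained in `H` contains exactly `m` points of `R`. -/
def IsRelativeMOvoid (Q : QuadraticForm F V) (n : ℕ) (H : Submodule F V) (m : ℕ)
    (R : Set (Submodule F V)) : Prop :=
  (∀ P ∈ R, IsSingularPoint Q P ∧ ¬ P ≤ H) ∧
  ∀ g : Submodule F V, IsGenerator Q n g → ¬ g ≤ H → {P ∈ R | P ≤ g}.ncard = m

/-!
Isometries act transitively on singular points, so every singular point lies on the same number
`N` of generators. Counting pairs (point of `R`, generator not contained in `H`) gives
`|R| * N = m * G`, where `G` is the number of generators not contained in `H`; hence `|R| / m` is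
the same for all relative ovoids. The set of all singular points off `H` is a relative
`q ^ (n - 1)`-ovoid, so it remains to count it. Write `H = ker f` and take a generator `W ≤ H`.
The affine points correspond to the singular `v` with `f v = 1`. None of these lies in `W^⊥`, and
for `v ∉ W^⊥` the form is a nonconstant affine function on the coset `v + W`, so exactly one vector
in `q` of that coset is singular.
-/

section IsotropicVectors

theorem exists_mvPolynomial_eval_eq {ι : Type*} [Fintype ι] (Q : QuadraticForm F V)
    (b : Basis ι F V) :
    ∃ f : MvPolynomial ι F, f.totalDegree ≤ 2 ∧
      ∀ x, MvPolynomial.eval x f = Q (∑ i, x i • b i) := by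
  have := Module.Free.of_basis b
  obtain ⟨B, rfl⟩ := LinearMap.BilinMap.toQuadraticMap_surjective Q
  refine ⟨∑ i, ∑ j, MvPolynomial.C (B (b i) (b j)) * (MvPolynomial.X i * MvPolynomial.X j),
    ?_, fun x => ?_⟩
  · refine MvPolynomial.totalDegree_finsetSum_le fun i _ =>
      MvPolynomial.totalDegree_finsetSum_le fun j _ =>
      (MvPolynomial.totalDegree_mul _ _).trans ?_
    rw [MvPolynomial.totalDegree_C, zero_add]
    exact (MvPolynomial.totalDegree_mul _ _).trans (by simp)
  · simp only [map_sum, map_smul, map_mul, MvPolynomial.eval_C, MvPolynomial.eval_X,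
      LinearMap.BilinMap.toQuadraticMap_apply, LinearMap.sum_apply, LinearMap.smul_apply,
      smul_eq_mul, Finset.mul_sum]
    rw [Finset.sum_comm]
    exact Finset.sum_congr rfl fun i _ => Finset.sum_congr rfl fun j _ => by ring

theorem exists_ne_zero_map_eq_zero_of_three_le_finrank [Finite F] (Q : QuadraticForm F V)
    (hV : 3 ≤ finrank F V) : ∃ v : V, v ≠ 0 ∧ Q v = 0 := by
  classical
  have := Fintype.ofFinite F
  have : FiniteDimensional F V := .of_finrank_pos (by omega)
  obtain ⟨p, _⟩ := CharP.exists F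
  let b := finBasis F V
  obtain ⟨f, totalDegree_f, eval_f⟩ := exists_mvPolynomial_eval_eq Q b
  have p_dvd := char_dvd_card_solutions p (f := f) (by rw [Fintype.card_fin]; omega)
  have zero_root : MvPolynomial.eval 0 f = 0 := by rw [eval_f]; simp
  have one_lt_card : 1 < Fintype.card {x // MvPolynomial.eval x f = 0} :=
    (CharP.char_is_prime F p).one_lt.trans_le
      (Nat.le_of_dvd (Fintype.card_pos_iff.2 ⟨⟨0, zero_root⟩⟩) p_dvd)
  obtain ⟨⟨x, hx⟩, x_ne⟩ := Fintype.exists_ne_of_one_lt_card one_lt_card ⟨0, zero_root⟩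
  refine ⟨∑ i, x i • b i, fun h => x_ne (Subtype.ext (funext ?_)), (eval_f x).symm.trans hx⟩
  exact Fintype.linearIndependent_iff.1 b.linearIndependent x h

end IsotropicVectors

section Orthogonal

/-- The orthogonal complement of `W` with respect to the polar form of `Q`. -/
def polarOrthogonal (Q : QuadraticForm F V) (W : Submodule F V) : Submodule F V :=
  LinearMap.BilinForm.orthogonal Q.polarBilin W

variable {Q : QuadraticForm F V} {W : Submodule F V}

theorem mem_polarOrthogonal {v : V} :
    v ∈ polarOrthogonal Q W ↔ ∀ w ∈ W, QuadraticMap.polar Q w v = 0 :=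
  Iff.rfl

theorem TotallySingular.sup_span_singleton (hW : TotallySingular Q W) {v : V} (hv : Q v = 0)
    (hvW : v ∈ polarOrthogonal Q W) : TotallySingular Q (W ⊔ Submodule.span F {v}) := by
  intro x hx
  obtain ⟨w, hw, y, hy, rfl⟩ := Submodule.mem_sup.1 hx
  obtain ⟨a, rfl⟩ := Submodule.mem_span_singleton.1 hy
  rw [QuadraticMap.map_add Q, hW w hw, QuadraticMap.map_smul, hv, QuadraticMap.polar_smul_right,
    mem_polarOrthogonal.1 hvW w hw]
  simp

theorem TotallySingular.finrank_add_finrank_inf_polarOrthogonal [FiniteDimensional F V]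
    {U : Submodule F V} (hU : NondegOn Q U) (hW : TotallySingular Q W) (hWU : W ≤ U) :
    finrank F W + finrank F (U ⊓ polarOrthogonal Q W : Submodule F V) = finrank F U := by
  set B : LinearMap.BilinForm F U := (Q.comp U.subtype).polarBilin
  set W' : Submodule F U := W.submoduleOf U
  have disjoint_ker : W' ⊓ LinearMap.ker B = ⊥ := by
    refine eq_bot_iff.2 fun v hv => Subtype.ext (hU v v.2 (hW v hv.1) fun w hw => ?_)
    exact LinearMap.congr_fun hv.2 ⟨w, hw⟩
  have orthogonal_eq : B.orthogonal W' = (U ⊓ polarOrthogonal Q W).submoduleOf U := by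
    ext v
    exact ⟨fun hv => ⟨v.2, fun w hw => hv ⟨w, hWU hw⟩ hw⟩, fun hv w hw => hv.2 w hw⟩
  have finrank_eq := LinearMap.BilinForm.finrank_add_finrank_orthogonal' (B := B) W'
  rwa [disjoint_ker, finrank_bot, add_zero, orthogonal_eq,
    (Submodule.submoduleOfEquivOfLe hWU).finrank_eq,
    (Submodule.submoduleOfEquivOfLe inf_le_left).finrank_eq] at finrank_eq

theorem TotallySingular.exists_finrank_eq_add_one [Finite F] (hW : TotallySingular Q W)
    (hV : 2 * finrank F W + 3 ≤ finrank F V) :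
    ∃ W', TotallySingular Q W' ∧ finrank F W' = finrank F W + 1 := by
  have : FiniteDimensional F V := .of_finrank_pos (by omega)
  obtain ⟨C, hC⟩ := Submodule.exists_isCompl W
  have finrank_C := Submodule.finrank_add_eq_of_isCompl hC
  have finrank_orthogonal := LinearMap.BilinForm.finrank_add_finrank_orthogonal'
    (B := Q.polarBilin) W
  have finrank_inf := Submodule.finrank_sup_add_finrank_inf_eq C (polarOrthogonal Q W)
  have finrank_sup_le := Submodule.finrank_le (C ⊔ polarOrthogonal Q W)
  rw [polarOrthogonal] at finrank_inf finrank_sup_le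
  obtain ⟨v, v_ne, hv⟩ := exists_ne_zero_map_eq_zero_of_three_le_finrank
    (Q.comp (C ⊓ polarOrthogonal Q W).subtype) (by rw [polarOrthogonal]; omega)
  have v_notMem : (v : V) ∉ W := fun hvW =>
    v_ne (Subtype.ext (Submodule.disjoint_def.1 hC.disjoint v hvW v.2.1))
  exact ⟨_, hW.sup_span_singleton hv v.2.2, Submodule.finrank_sup_span_singleton v_notMem⟩

theorem exists_isGenerator_of_two_mul_lt_finrank [Finite F] (Q : QuadraticForm F V) {n : ℕ}
    (hn : 2 * n < finrank F V) : ∃ W, IsGenerator Q n W := by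
  have : FiniteDimensional F V := .of_finrank_pos (by omega)
  induction n with
  | zero => exact ⟨⊥, by rintro v rfl; exact map_zero Q, finrank_bot F V⟩
  | succ n ih =>
    obtain ⟨W, hW, finrank_W⟩ := ih (by omega)
    obtain ⟨W', hW', finrank_W'⟩ := hW.exists_finrank_eq_add_one (by omega)
    exact ⟨W', hW', by rw [finrank_W', finrank_W]⟩

theorem exists_isGenerator_le_of_two_mul_lt_finrank [Finite F] (Q : QuadraticForm F V)
    {U : Submodule F V} {n : ℕ} (hn : 2 * n < finrank F U) : ∃ W ≤ U, IsGenerator Q n W := by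
  obtain ⟨W, hW, finrank_W⟩ := exists_isGenerator_of_two_mul_lt_finrank (Q.comp U.subtype) hn
  refine ⟨W.map U.subtype, Submodule.map_subtype_le U W, ?_, ?_⟩
  · rintro _ ⟨w, hw, rfl⟩
    exact hW w hw
  · rw [Submodule.finrank_map_subtype_eq, finrank_W]

theorem HasWittIndex.mem_of_mem_polarOrthogonal [FiniteDimensional F V] {n : ℕ}
    (hQ : HasWittIndex Q n) (hW : IsGenerator Q n W) {v : V} (hv : Q v = 0)
    (hvW : v ∈ polarOrthogonal Q W) : v ∈ W := by
  by_contra v_notMem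
  have finrank_le := hQ.1 _ (hW.1.sup_span_singleton hv hvW)
  rw [Submodule.finrank_sup_span_singleton v_notMem, hW.2] at finrank_le
  omega

end Orthogonal

section Isometries

variable {Q : QuadraticForm F V}

theorem inv_smul_polarBilin_apply_self {w : V} (hw : Q w ≠ 0) :
    ((Q w)⁻¹ • Q.polarBilin w) w = 2 := by
  rw [LinearMap.smul_apply, QuadraticMap.polarBilin_apply_apply, QuadraticMap.polar_self,
    two_nsmul, smul_eq_mul, mul_add, inv_mul_cancel₀ hw, one_add_one_eq_two]

/-- The reflection `x ↦ x - (B(w,x) / Q(w)) w` in a nonsingular vector `w`, as an isometry of `Q`.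
In characteristic `2` it is the orthogonal transvection with centre `w`. -/
def reflectionIsometry {w : V} (hw : Q w ≠ 0) : Q.IsometryEquiv Q where
  toLinearEquiv := Module.reflection (inv_smul_polarBilin_apply_self hw)
  map_app' x := by
    simp only [AddHom.toFun_eq_coe, LinearMap.coe_toAddHom, LinearEquiv.coe_coe,
      Module.reflection_apply, LinearMap.smul_apply, QuadraticMap.polarBilin_apply_apply,
      smul_eq_mul, sub_eq_add_neg, ← neg_smul, QuadraticMap.map_add, QuadraticMap.map_smul,
      mul_neg, neg_mul, neg_neg, QuadraticMap.polar_smul_right, QuadraticMap.polar_comm Q x w]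
    field_simp
    ring

theorem reflectionIsometry_apply {w : V} (hw : Q w ≠ 0) (x : V) :
    reflectionIsometry hw x = x - ((Q w)⁻¹ * QuadraticMap.polar Q w x) • w :=
  Module.reflection_apply x (inv_smul_polarBilin_apply_self hw)

theorem exists_isometryEquiv_apply_eq_of_polar_ne_zero {u v : V} (hu : Q u = 0) (hv : Q v = 0)
    (huv : QuadraticMap.polar Q u v ≠ 0) : ∃ e : Q.IsometryEquiv Q, e u = v := by
  have map_sub : Q (u - v) = -QuadraticMap.polar Q u v := by
    simp [sub_eq_add_neg, QuadraticMap.map_add, hu, hv]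
  have polar_sub : QuadraticMap.polar Q (u - v) u = -QuadraticMap.polar Q u v := by
    simp [QuadraticMap.polar_sub_left, QuadraticMap.polar_self, hu, QuadraticMap.polar_comm Q v u]
  refine ⟨reflectionIsometry (map_sub ▸ neg_ne_zero.2 huv), ?_⟩
  rw [reflectionIsometry_apply, map_sub, polar_sub, inv_mul_cancel₀ (neg_ne_zero.2 huv), one_smul,
    sub_sub_cancel]

theorem exists_apply_ne_zero_and_apply_ne_zero {f g : Dual F V} (hf : f ≠ 0) (hg : g ≠ 0) :
    ∃ v, f v ≠ 0 ∧ g v ≠ 0 := by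
  by_contra! h
  have top_subset : ((⊤ : Submodule F V) : Set V) ⊆ LinearMap.ker f ∪ LinearMap.ker g :=
    fun v _ => or_iff_not_imp_left.2 (h v)
  rcases AddSubgroupClass.subset_union.1 top_subset with hf' | hg'
  · exact hf (LinearMap.ker_eq_top.1 (top_le_iff.1 hf'))
  · exact hg (LinearMap.ker_eq_top.1 (top_le_iff.1 hg'))

theorem Nondeg.polarBilin_ne_zero (hQ : Nondeg Q) {v : V} (hv : Q v = 0) (v_ne : v ≠ 0) :
    Q.polarBilin v ≠ 0 :=
  fun h => v_ne (hQ v hv (LinearMap.congr_fun h))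

theorem Nondeg.exists_singular_polar_ne_zero (hQ : Nondeg Q) {u v : V} (hu : Q u = 0)
    (hv : Q v = 0) (u_ne : u ≠ 0) (v_ne : v ≠ 0) (huv : QuadraticMap.polar Q u v = 0) :
    ∃ w, Q w = 0 ∧ QuadraticMap.polar Q u w ≠ 0 ∧ QuadraticMap.polar Q v w ≠ 0 := by
  obtain ⟨w, huw, hvw⟩ := exists_apply_ne_zero_and_apply_ne_zero
    (hQ.polarBilin_ne_zero hu u_ne) (hQ.polarBilin_ne_zero hv v_ne)
  rw [QuadraticMap.polarBilin_apply_apply] at huw hvw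
  refine ⟨w + (-Q w / QuadraticMap.polar Q u w) • u, ?_, ?_, ?_⟩
  · rw [QuadraticMap.map_add Q, QuadraticMap.map_smul, hu, QuadraticMap.polar_smul_right,
      QuadraticMap.polar_comm Q w u, smul_eq_mul, smul_eq_mul, div_mul_cancel₀ _ huw]
    ring
  · simpa [QuadraticMap.polar_add_right, QuadraticMap.polar_self, hu] using huw
  · simpa [QuadraticMap.polar_add_right, QuadraticMap.polar_comm Q v u, huv] using hvw

theorem Nondeg.exists_isometryEquiv_apply_eq (hQ : Nondeg Q) {u v : V} (hu : Q u = 0)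
    (hv : Q v = 0) (u_ne : u ≠ 0) (v_ne : v ≠ 0) : ∃ e : Q.IsometryEquiv Q, e u = v := by
  by_cases huv : QuadraticMap.polar Q u v = 0
  · obtain ⟨w, hw, huw, hvw⟩ := hQ.exists_singular_polar_ne_zero hu hv u_ne v_ne huv
    obtain ⟨e, rfl⟩ := exists_isometryEquiv_apply_eq_of_polar_ne_zero hu hw huw
    rw [QuadraticMap.polar_comm] at hvw
    obtain ⟨e', rfl⟩ := exists_isometryEquiv_apply_eq_of_polar_ne_zero hw hv hvw
    exact ⟨e.trans e', rfl⟩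
  · exact exists_isometryEquiv_apply_eq_of_polar_ne_zero hu hv huv

end Isometries

section GeneratorsThroughPoint

/-- The generators containing the subspace `P`. -/
def generatorsThrough (Q : QuadraticForm F V) (n : ℕ) (P : Submodule F V) :
    Set (Submodule F V) :=
  {g | IsGenerator Q n g ∧ P ≤ g}

variable {Q : QuadraticForm F V} {n : ℕ} {P P' : Submodule F V}

theorem mem_generatorsThrough {g : Submodule F V} :
    g ∈ generatorsThrough Q n P ↔ IsGenerator Q n g ∧ P ≤ g :=
  Iff.rfl

theorem IsGenerator.map_isometryEquiv {g : Submodule F V} (hg : IsGenerator Q n g)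
    (e : Q.IsometryEquiv Q) : IsGenerator Q n (g.map e.toLinearEquiv.toLinearMap) := by
  refine ⟨?_, (e.toLinearEquiv.finrank_map_eq g).trans hg.2⟩
  rintro _ ⟨v, hv, rfl⟩
  exact (e.map_app v).trans (hg.1 v hv)

theorem IsSingularPoint.exists_map_isometryEquiv_eq (hQ : Nondeg Q) (hP : IsSingularPoint Q P)
    (hP' : IsSingularPoint Q P') :
    ∃ e : Q.IsometryEquiv Q, P.map e.toLinearEquiv.toLinearMap = P' := by
  obtain ⟨u, u_ne, hu, rfl⟩ := hP
  obtain ⟨v, v_ne, hv, rfl⟩ := hP'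
  obtain ⟨e, rfl⟩ := hQ.exists_isometryEquiv_apply_eq hu hv u_ne v_ne
  exact ⟨e, by rw [Submodule.map_span, Set.image_singleton]; rfl⟩

theorem IsGenerator.exists_isSingularPoint_le {g : Submodule F V} (hg : IsGenerator Q n g)
    (hn : n ≠ 0) : ∃ P ≤ g, IsSingularPoint Q P := by
  have g_ne : g ≠ ⊥ := by
    rintro rfl
    exact hn (hg.2.symm.trans (finrank_bot F V))
  obtain ⟨v, hv, v_ne⟩ := g.exists_mem_ne_zero_of_ne_bot g_ne
  exact ⟨_, (Submodule.span_singleton_le_iff_mem v g).2 hv, v, v_ne, hg.1 v hv, rfl⟩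

variable [Finite V]

theorem ncard_generatorsThrough_le (hQ : Nondeg Q) (hP : IsSingularPoint Q P)
    (hP' : IsSingularPoint Q P') :
    (generatorsThrough Q n P).ncard ≤ (generatorsThrough Q n P').ncard := by
  obtain ⟨e, rfl⟩ := hP.exists_map_isometryEquiv_eq hQ hP'
  refine Set.ncard_le_ncard_of_injOn (Submodule.map e.toLinearEquiv.toLinearMap)
    (fun g hg => ⟨hg.1.map_isometryEquiv e, Submodule.map_mono hg.2⟩) ?_
  exact (Submodule.map_injective_of_injective e.toLinearEquiv.injective).injOn

theorem ncard_generatorsThrough_eq (hQ : Nondeg Q) (hP : IsSingularPoint Q P)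
    (hP' : IsSingularPoint Q P') :
    (generatorsThrough Q n P).ncard = (generatorsThrough Q n P').ncard :=
  (ncard_generatorsThrough_le hQ hP hP').antisymm (ncard_generatorsThrough_le hQ hP' hP)

end GeneratorsThroughPoint

section DoubleCounting

variable [Finite V] {Q : QuadraticForm F V} {n m m' : ℕ} {H : Submodule F V}
  {R R' : Set (Submodule F V)}

theorem IsRelativeMOvoid.ncard_mul_eq (hR : IsRelativeMOvoid Q n H m R) {N : ℕ}
    (hN : ∀ P, IsSingularPoint Q P → (generatorsThrough Q n P).ncard = N) :
    R.ncard * N = {g | IsGenerator Q n g ∧ ¬ g ≤ H}.ncard * m := by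
  classical
  have := Fintype.ofFinite (Submodule F V)
  rw [Set.ncard_eq_toFinset_card', Set.ncard_eq_toFinset_card']
  refine Finset.card_mul_eq_card_mul (· ≤ ·) (fun P hP => ?_) fun g hg => ?_
  · rw [Set.mem_toFinset] at hP
    rw [← hN P (hR.1 P hP).1, Set.ncard_eq_toFinset_card']
    congr 1
    ext g
    have not_le (hPg : P ≤ g) : ¬ g ≤ H := fun hgH => (hR.1 P hP).2 (hPg.trans hgH)
    simp only [Finset.mem_bipartiteAbove, Set.mem_toFinset, Set.mem_ofPred_eq,
      mem_generatorsThrough]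
    tauto
  · rw [Set.mem_toFinset] at hg
    rw [← hR.2 g hg.1 hg.2, Set.ncard_eq_toFinset_card']
    congr 1
    ext P
    simp only [Finset.mem_bipartiteBelow, Set.mem_toFinset, Set.mem_ofPred_eq]

theorem IsRelativeMOvoid.ncard_mul_comm (hn : n ≠ 0) (hQ : Nondeg Q) {W : Submodule F V}
    (hW : IsGenerator Q n W) (hR : IsRelativeMOvoid Q n H m R)
    (hR' : IsRelativeMOvoid Q n H m' R') : R.ncard * m' = R'.ncard * m := by
  obtain ⟨P₀, hP₀W, hP₀⟩ := hW.exists_isSingularPoint_le hn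
  set N := (generatorsThrough Q n P₀).ncard
  set G := {g | IsGenerator Q n g ∧ ¬ g ≤ H}.ncard
  have N_pos : 0 < N := (Set.ncard_pos (Set.toFinite _)).2 ⟨W, hW, hP₀W⟩
  have count : R.ncard * N = G * m :=
    hR.ncard_mul_eq fun P hP => ncard_generatorsThrough_eq hQ hP hP₀
  have count' : R'.ncard * N = G * m' :=
    hR'.ncard_mul_eq fun P hP => ncard_generatorsThrough_eq hQ hP hP₀
  refine Nat.eq_of_mul_eq_mul_right N_pos ?_
  calc R.ncard * m' * N = R.ncard * N * m' := by ring
    _ = R'.ncard * N * m := by rw [count, count']; ring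
    _ = R'.ncard * m * N := by ring

end DoubleCounting

section AffinePoints

theorem exists_dual_ker_eq_of_finrank_add_one_eq {H : Submodule F V}
    (hH : finrank F H + 1 = finrank F V) : ∃ f : Dual F V, LinearMap.ker f = H := by
  have : FiniteDimensional F V := .of_finrank_pos (by omega)
  have H_lt : H < ⊤ := lt_top_iff_ne_top.2 (by rintro rfl; rw [finrank_top] at hH; omega)
  obtain ⟨f, f_ne, hf⟩ := H.exists_le_ker_of_lt_top H_lt
  have finrank_ker := Dual.finrank_ker_add_one_of_ne_zero f_ne
  exact ⟨f, (Submodule.eq_of_le_of_finrank_eq hf (by omega)).symm⟩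

theorem ncard_mem_and_apply_eq_mul_card [FiniteDimensional F V] (f : Dual F V) {U : Submodule F V}
    (hU : ¬ U ≤ LinearMap.ker f) (c : F) :
    {v | v ∈ U ∧ f v = c}.ncard * Nat.card F = Nat.card U := by
  set φ : Dual F U := f.domRestrict U
  have φ_ne : φ ≠ 0 := fun h => hU fun u hu => LinearMap.congr_fun h ⟨u, hu⟩
  obtain ⟨u, hu⟩ := LinearMap.surjective φ_ne c
  have fiber_eq : {v | v ∈ U ∧ f v = c} = Set.range fun k : LinearMap.ker φ => (u + k : V) := by
    ext v
    constructor
    · rintro ⟨hvU, hv⟩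
      refine ⟨⟨⟨v, hvU⟩ - u, ?_⟩, add_sub_cancel (u : V) v⟩
      rw [LinearMap.mem_ker, map_sub, hu, ← hv]
      exact sub_self (f v)
    · rintro ⟨k, rfl⟩
      exact ⟨(u + k.1).2, (map_add φ u k).trans (by rw [hu, k.2, add_zero])⟩
  have translate_injective : Function.Injective fun k : LinearMap.ker φ => (u + k : V) :=
    fun k l hkl => Subtype.ext (Subtype.ext (add_left_cancel hkl))
  rw [fiber_eq, Set.ncard_range_of_injective translate_injective,
    Module.natCard_eq_pow_finrank (K := F), ← pow_succ, Dual.finrank_ker_add_one_of_ne_zero φ_ne,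
    ← Module.natCard_eq_pow_finrank]

/-- The points of the quadric of `Q` off the hyperplane `H`. -/
def affinePoints (Q : QuadraticForm F V) (H : Submodule F V) : Set (Submodule F V) :=
  {P | IsSingularPoint Q P ∧ ¬ P ≤ H}

variable {Q : QuadraticForm F V} {f : Dual F V}

/- A point off `ker f` contains exactly one vector on which `f` takes the value `1`. -/
theorem ncard_setOf_mem_affinePoints_and_le (U : Submodule F V) :
    {P ∈ affinePoints Q (LinearMap.ker f) | P ≤ U}.ncard =
      {v | v ∈ U ∧ Q v = 0 ∧ f v = 1}.ncard := by
  have span_injOn : Set.InjOn (Submodule.span F {·}) {v | v ∈ U ∧ Q v = 0 ∧ f v = 1} := by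
    rintro u ⟨-, -, hu⟩ v ⟨-, -, hv⟩ (huv : Submodule.span F {u} = Submodule.span F {v})
    obtain ⟨a, rfl⟩ := Submodule.mem_span_singleton.1
      (huv ▸ Submodule.mem_span_singleton_self u : u ∈ Submodule.span F {v})
    obtain rfl : a = 1 := by simpa [hv] using hu
    exact one_smul F v
  rw [← span_injOn.ncard_image]
  congr 1
  ext P
  constructor
  · rintro ⟨⟨⟨v, -, hv, rfl⟩, hvf⟩, hvU⟩
    rw [Submodule.span_singleton_le_iff_mem] at hvf hvU
    have fv_ne : f v ≠ 0 := hvf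
    exact ⟨(f v)⁻¹ • v, ⟨U.smul_mem _ hvU, by simp [QuadraticMap.map_smul, hv], by simp [fv_ne]⟩,
      Submodule.span_singleton_smul_eq (inv_ne_zero fv_ne).isUnit v⟩
  · rintro ⟨v, ⟨hvU, hv, hfv⟩, rfl⟩
    refine ⟨⟨⟨v, ?_, hv, rfl⟩, ?_⟩, (Submodule.span_singleton_le_iff_mem v U).2 hvU⟩
    · rintro rfl
      simp at hfv
    · simp [Submodule.span_singleton_le_iff_mem, hfv]

theorem ncard_affinePoints :
    (affinePoints Q (LinearMap.ker f)).ncard = {v | Q v = 0 ∧ f v = 1}.ncard := by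
  simpa using ncard_setOf_mem_affinePoints_and_le (Q := Q) (f := f) ⊤

variable [Finite F] [FiniteDimensional F V]

theorem isRelativeMOvoid_affinePoints (Q : QuadraticForm F V) (f : Dual F V) (n : ℕ) :
    IsRelativeMOvoid Q n (LinearMap.ker f) (Nat.card F ^ (n - 1))
      (affinePoints Q (LinearMap.ker f)) := by
  refine ⟨fun P hP => hP, fun g hg hgf => ?_⟩
  have := Module.finite_of_finite F (M := V)
  have n_ne : n ≠ 0 := by
    rintro rfl
    exact hgf (Submodule.finrank_eq_zero.1 hg.2 ▸ bot_le)
  have set_eq : {v | v ∈ g ∧ Q v = 0 ∧ f v = 1} = {v | v ∈ g ∧ f v = 1} := by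
    ext v
    exact and_congr_right fun hv => and_iff_right (hg.1 v hv)
  rw [ncard_setOf_mem_affinePoints_and_le, set_eq]
  refine Nat.eq_of_mul_eq_mul_right (Nat.card_pos (α := F)) ?_
  rw [ncard_mem_and_apply_eq_mul_card f hgf, Module.natCard_eq_pow_finrank (K := F), hg.2,
    pow_sub_one_mul n_ne]

end AffinePoints

section CosetCounting

variable {Q : QuadraticForm F V} {W : Submodule F V}

theorem TotallySingular.le_polarOrthogonal (hW : TotallySingular Q W) :
    W ≤ polarOrthogonal Q W := fun v hv w hw => by
  rw [QuadraticMap.polarBilin_apply_apply, QuadraticMap.polar, hW _ (W.add_mem hw hv), hW w hw,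
    hW v hv, sub_zero, sub_zero]

/- On the coset `v + W` the form `Q` is affine, with linear part `B(v, ·)`. -/
theorem TotallySingular.ncard_map_add_eq_zero_mul_card [FiniteDimensional F V]
    (hW : TotallySingular Q W) {v : V} (hv : v ∉ polarOrthogonal Q W) :
    {w | w ∈ W ∧ Q (v + w) = 0}.ncard * Nat.card F = Nat.card W := by
  have W_not_le : ¬ W ≤ LinearMap.ker (Q.polarBilin v) := fun h => hv fun w hw =>
    (QuadraticMap.polar_comm Q w v).trans (h hw)
  rw [← ncard_mem_and_apply_eq_mul_card _ W_not_le (-Q v)]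
  congr 2
  ext w
  refine and_congr_right fun hw => ?_
  rw [QuadraticMap.map_add Q, hW w hw, add_zero, QuadraticMap.polarBilin_apply_apply,
    eq_neg_iff_add_eq_zero, add_comm]

variable {f : Dual F V}

theorem TotallySingular.ncard_notMem_polarOrthogonal_map_add_eq_zero (hW : TotallySingular Q W)
    (hWf : W ≤ LinearMap.ker f) (hmax : ∀ v ∈ polarOrthogonal Q W, Q v = 0 → f v ≠ 1) {w : V}
    (hw : w ∈ W) :
    {v | f v = 1 ∧ v ∉ polarOrthogonal Q W ∧ Q (v + w) = 0}.ncard =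
      {v | Q v = 0 ∧ f v = 1}.ncard := by
  refine Set.ncard_congr' ((Equiv.addRight w).subtypeEquiv fun v => ?_)
  have hfw : f w = 0 := hWf hw
  have add_mem_iff : v + w ∈ polarOrthogonal Q W ↔ v ∈ polarOrthogonal Q W :=
    Submodule.add_mem_iff_left _ (hW.le_polarOrthogonal hw)
  have apply_ne_one := hmax (v + w)
  simp only [Set.mem_ofPred_eq, Equiv.coe_addRight, map_add, hfw, add_zero, add_mem_iff]
    at apply_ne_one ⊢
  tauto

variable [Finite F] [FiniteDimensional F V]

theorem TotallySingular.ncard_singular_mul_card (hW : TotallySingular Q W)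
    (hWf : W ≤ LinearMap.ker f)
    (hmax : ∀ v ∈ polarOrthogonal Q W, Q v = 0 → f v ≠ 1) :
    {v | Q v = 0 ∧ f v = 1}.ncard * Nat.card F =
      {v | f v = 1 ∧ v ∉ polarOrthogonal Q W}.ncard := by
  classical
  have := Module.finite_of_finite F (M := V)
  have := Fintype.ofFinite V
  set A := {v | Q v = 0 ∧ f v = 1}
  set S := {v | f v = 1 ∧ v ∉ polarOrthogonal Q W}
  have fiber_over_S (v) (hv : v ∈ S.toFinset) :
      ((W : Set V).toFinset.bipartiteAbove (fun v w => Q (v + w) = 0) v).card * Nat.card F =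
        Nat.card W := by
    rw [← hW.ncard_map_add_eq_zero_mul_card (Set.mem_toFinset.1 hv).2,
      Set.ncard_eq_toFinset_card']
    congr 2
    ext w
    simp
  have fiber_over_W (w) (hw : w ∈ (W : Set V).toFinset) :
      (S.toFinset.bipartiteBelow (fun v w => Q (v + w) = 0) w).card = A.ncard := by
    rw [← hW.ncard_notMem_polarOrthogonal_map_add_eq_zero hWf hmax (Set.mem_toFinset.1 hw),
      Set.ncard_eq_toFinset_card']
    congr 1
    ext v
    simp [S, and_assoc]
  refine Nat.eq_of_mul_eq_mul_left (Nat.card_pos (α := W)) ?_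
  calc Nat.card W * (A.ncard * Nat.card F)
      = (∑ w ∈ (W : Set V).toFinset,
          (S.toFinset.bipartiteBelow (fun v w => Q (v + w) = 0) w).card) * Nat.card F := by
        rw [Finset.sum_congr rfl fiber_over_W, Finset.sum_const, smul_eq_mul, mul_assoc,
          ← Set.ncard_eq_toFinset_card']
        rfl
    _ = ∑ v ∈ S.toFinset,
          ((W : Set V).toFinset.bipartiteAbove (fun v w => Q (v + w) = 0) v).card * Nat.card F := by
        rw [← Finset.sum_card_bipartiteAbove_eq_sum_card_bipartiteBelow, Finset.sum_mul]
    _ = Nat.card W * S.ncard := by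
        rw [Finset.sum_congr rfl fiber_over_S, Finset.sum_const, smul_eq_mul, mul_comm,
          ← Set.ncard_eq_toFinset_card']

theorem TotallySingular.ncard_singular_mul_card_sq (hW : TotallySingular Q W)
    (hWf : W ≤ LinearMap.ker f) (hmax : ∀ v ∈ polarOrthogonal Q W, Q v = 0 → f v ≠ 1)
    (hf : ¬ polarOrthogonal Q W ≤ LinearMap.ker f) :
    {v | Q v = 0 ∧ f v = 1}.ncard * Nat.card F ^ 2 +
      Nat.card F ^ finrank F (polarOrthogonal Q W) = Nat.card F ^ finrank F V := by
  have := Module.finite_of_finite F (M := V)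
  have f_not_le : ¬ ⊤ ≤ LinearMap.ker f := fun h => hf (le_top.trans h)
  have card_top := ncard_mem_and_apply_eq_mul_card f f_not_le 1
  have card_orthogonal := ncard_mem_and_apply_eq_mul_card f hf 1
  rw [Module.natCard_eq_pow_finrank (K := F) (V := (⊤ : Submodule F V)), finrank_top] at card_top
  rw [Module.natCard_eq_pow_finrank (K := F) (V := polarOrthogonal Q W)] at card_orthogonal
  have disjoint : Disjoint {v | f v = 1 ∧ v ∉ polarOrthogonal Q W}
      {v | v ∈ polarOrthogonal Q W ∧ f v = 1} :=
    Set.disjoint_left.2 fun v hv hv' => hv.2 hv'.1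
  have union_eq : {v | f v = 1 ∧ v ∉ polarOrthogonal Q W} ∪
      {v | v ∈ polarOrthogonal Q W ∧ f v = 1} = {v | v ∈ (⊤ : Submodule F V) ∧ f v = 1} := by
    ext v
    simp only [Set.mem_union, Set.mem_ofPred_eq, Submodule.mem_top]
    tauto
  rw [pow_two, ← mul_assoc, hW.ncard_singular_mul_card hWf hmax, ← card_orthogonal, ← card_top,
    ← add_mul, ← Set.ncard_union_eq disjoint, union_eq]

end CosetCounting

section RelativeOvoids

variable {Q : QuadraticForm F V} {n e : ℕ} {H W : Submodule F V}

theorem Nondeg.nondegOn_top (hQ : Nondeg Q) : NondegOn Q ⊤ :=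
  fun v _ hv h => hQ v hv fun w => h w Submodule.mem_top

theorem Nondeg.finrank_add_finrank_polarOrthogonal [FiniteDimensional F V] (hQ : Nondeg Q)
    (hW : TotallySingular Q W) : finrank F W + finrank F (polarOrthogonal Q W) = finrank F V := by
  have finrank_eq := hW.finrank_add_finrank_inf_polarOrthogonal hQ.nondegOn_top le_top
  rwa [top_inf_eq, finrank_top] at finrank_eq

theorem TotallySingular.not_polarOrthogonal_le [FiniteDimensional F V] (hQ : Nondeg Q)
    (hHnd : NondegOn Q H) (hH : H ≠ ⊤) (hW : TotallySingular Q W) (hWH : W ≤ H) :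
    ¬ polarOrthogonal Q W ≤ H := fun h => by
  have finrank_V := hQ.finrank_add_finrank_polarOrthogonal hW
  have finrank_H := hW.finrank_add_finrank_inf_polarOrthogonal hHnd hWH
  rw [inf_eq_right.2 h] at finrank_H
  exact (Submodule.finrank_lt hH).ne (finrank_H.symm.trans finrank_V)

variable [Finite F]

theorem ncard_affinePoints_mul_card (hV : finrank F V = 2 * n + 1 + e) (hQ : Nondeg Q)
    (hQw : HasWittIndex Q n) (hH : finrank F H + 1 = finrank F V) (hHnd : NondegOn Q H)
    (hW : IsGenerator Q n W) (hWH : W ≤ H) :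
    (affinePoints Q H).ncard * Nat.card F = Nat.card F ^ (n + e) * (Nat.card F ^ n - 1) := by
  have : FiniteDimensional F V := .of_finrank_pos (by omega)
  obtain ⟨f, rfl⟩ := exists_dual_ker_eq_of_finrank_add_one_eq hH
  have ker_ne_top : LinearMap.ker f ≠ ⊤ :=
    (Submodule.lt_top_of_finrank_lt_finrank (by omega)).ne
  have apply_ne_one (v) (hv : v ∈ polarOrthogonal Q W) (hQv : Q v = 0) : f v ≠ 1 := by
    rw [LinearMap.mem_ker.1 (hWH (hQw.mem_of_mem_polarOrthogonal hW hQv hv))]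
    exact zero_ne_one
  have count := hW.1.ncard_singular_mul_card_sq hWH apply_ne_one
    (hW.1.not_polarOrthogonal_le hQ hHnd ker_ne_top hWH)
  have finrank_orthogonal : finrank F (polarOrthogonal Q W) = n + e + 1 := by
    have := hQ.finrank_add_finrank_polarOrthogonal hW.1
    rw [hW.2] at this
    omega
  rw [finrank_orthogonal, hV] at count
  rw [ncard_affinePoints]
  refine Nat.eq_of_mul_eq_mul_right (Nat.card_pos (α := F)) ?_
  calc {v | Q v = 0 ∧ f v = 1}.ncard * Nat.card F * Nat.card F
      = Nat.card F ^ (2 * n + 1 + e) - Nat.card F ^ (n + e + 1) := by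
        rw [← count, Nat.add_sub_cancel, pow_two, mul_assoc]
    _ = Nat.card F ^ (n + e) * (Nat.card F ^ n - 1) * Nat.card F := by
        rw [Nat.mul_sub, Nat.sub_mul]
        ring_nf

/- For `e = 1` this is `Q⁻(2n+1,q)` with a section `Q(2n,q)`, for `e = 0` it is `Q(2n,q)` with a
section `Q⁺(2n-1,q)`. -/
theorem IsRelativeMOvoid.ncard_eq {m : ℕ} {R : Set (Submodule F V)} (hn : n ≠ 0)
    (hV : finrank F V = 2 * n + 1 + e) (hQ : Nondeg Q) (hQw : HasWittIndex Q n)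
    (hH : finrank F H + 1 = finrank F V) (hHnd : NondegOn Q H) (hW : IsGenerator Q n W)
    (hWH : W ≤ H) (hR : IsRelativeMOvoid Q n H m R) :
    R.ncard = m * Nat.card F ^ e * (Nat.card F ^ n - 1) := by
  have : FiniteDimensional F V := .of_finrank_pos (by omega)
  have := Module.finite_of_finite F (M := V)
  have affine_count := ncard_affinePoints_mul_card hV hQ hQw hH hHnd hW hWH
  have affine_isRelativeMOvoid :
      IsRelativeMOvoid Q n H (Nat.card F ^ (n - 1)) (affinePoints Q H) := by
    obtain ⟨f, rfl⟩ := exists_dual_ker_eq_of_finrank_add_one_eq hH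
    exact isRelativeMOvoid_affinePoints Q f n
  have count := hR.ncard_mul_comm hn hQ hW affine_isRelativeMOvoid
  refine Nat.eq_of_mul_eq_mul_right (pow_pos (Nat.card_pos (α := F)) n) ?_
  calc R.ncard * Nat.card F ^ n
      = R.ncard * Nat.card F ^ (n - 1) * Nat.card F := by rw [mul_assoc, pow_sub_one_mul hn]
    _ = (affinePoints Q H).ncard * Nat.card F * m := by rw [count]; ring
    _ = m * Nat.card F ^ e * (Nat.card F ^ n - 1) * Nat.card F ^ n := by
        rw [affine_count, pow_add]; ring

end RelativeOvoids

/-- A relative `m`-ovoid of `Q⁻(2n+1,q)` has size `m·q·(qⁿ − 1)`. -/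
theorem statement_1
    (q n : ℕ) [Fintype F] (hq : Fintype.card F = q) (hn : 2 ≤ n)
    (hV : finrank F V = 2 * n + 2)
    (Q : QuadraticForm F V) (hQnd : Nondeg Q) (hQw : HasWittIndex Q n)
    (H : Submodule F V) (hH : finrank F H = 2 * n + 1) (hHnd : NondegOn Q H)
    (m : ℕ) (R : Set (Submodule F V)) (hR : IsRelativeMOvoid Q n H m R) :
    R.ncard = m * q * (q ^ n - 1) := by
  obtain ⟨W, hWH, hW⟩ := exists_isGenerator_le_of_two_mul_lt_finrank Q (n := n) (U := H) (by omega)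
  rw [hR.ncard_eq (e := 1) (by omega) hV hQnd hQw (by omega) hHnd hW hWH, pow_one,
    Nat.card_eq_fintype_card, hq]
end
end

section
/- Let H' ≤ V be another hyperplane such that the restriction of Q to H' is nondegenerate (so the singular points in H' form a parabolic quadric Q'), and suppose the restriction of Q to H ∩ H' is nondegenerate of Witt index n − 1 (i.e. the section 𝒬 ∩ Q' is an elliptic quadric Q⁻(2n−1,q)). If R is a relative m-ovoid of Q⁻(2n+1,q) with respect to 𝒬, then the number of points of R contained in H' equals m(qⁿ + 1). -/
noncomputable section

open Module

variable {F V : Type*} [Field F] [AddCommGroup V] [Module F V]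

/-- The restriction of `Q` to the subspace `U` has Witt index `k`. -/
def HasWittIndexOn (Q : QuadraticForm F V) (U : Submodule F V) (k : ℕ) : Prop :=
  (∀ W : Submodule F V, W ≤ U → TotallySingular Q W → finrank F W ≤ k) ∧
  ∃ W : Submodule F V, W ≤ U ∧ TotallySingular Q W ∧ finrank F W = k

/-! Count incident pairs `(P, g)` with `P ∈ R` a point of `H'` and `g` a generator of `H'`. No
generator of `H'` lies in `H`, since `H ⊓ H'` has Witt index `n - 1`; so each of them carries
exactly `m` points of `R`, i.e. `R` cuts an `m`-ovoid on the parabolic quadric of `H'`. The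
generators of `H'` through a point correspond to the generators of a nondegenerate space of
dimension `2n - 1`, and a nondegenerate space of dimension `2n + 1` has `qⁿ + 1` times as many
generators as one of dimension `2n - 1`. That ratio comes from the same count applied to all
singular vectors, of which there are `q²ⁿ`. -/

section Counting

theorem ncard_mul_eq_ncard_mul {α β : Type*} {s : Set α} {t : Set β} (hs : s.Finite)
    (ht : t.Finite) (r : α → β → Prop) {a b : ℕ} (ha : ∀ x ∈ s, {y ∈ t | r x y}.ncard = a)
    (hb : ∀ y ∈ t, {x ∈ s | r x y}.ncard = b) : s.ncard * a = t.ncard * b := by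
  classical
  lift s to Finset α using hs
  lift t to Finset β using ht
  simp only [Set.ncard_coe_finset]
  refine Finset.card_mul_eq_card_mul r (fun x hx => ?_) fun y hy => ?_
  · simpa only [← Set.ncard_coe_finset, Finset.coe_bipartiteAbove, SetLike.mem_coe] using ha x hx
  · simpa only [← Set.ncard_coe_finset, Finset.coe_bipartiteBelow, SetLike.mem_coe] using hb y hy

theorem finite_setOf_submodule_le (X : Submodule F V) [Finite X] :
    {U : Submodule F V | U ≤ X}.Finite :=
  (X : Set V).toFinite.finite_subsets.preimage SetLike.coe_injective.injOn

theorem natCard_mul_add_eq_zero [Finite F] {ι : Type*} [Finite ι] (f : ι → F) :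
    Nat.card {t : F × F × ι // t.1 * t.2.1 + f t.2.2 = 0} =
      Nat.card F * Nat.card {i // f i = 0} + (Nat.card F - 1) * Nat.card ι := by
  rw [← Nat.card_units, ← Nat.card_prod, ← Nat.card_prod, ← Nat.card_sum]
  symm
  refine Nat.card_eq_of_bijective (Sum.elim (fun s => ⟨(s.1, 0, s.2), by simp [s.2.2]⟩)
    fun s => ⟨(-f s.2 * ↑s.1⁻¹, s.1, s.2), by simp⟩) ⟨?_, ?_⟩
  · rintro (⟨a, i⟩ | ⟨b, i⟩) (⟨a', i'⟩ | ⟨b', i'⟩) h <;>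
      simp only [Sum.elim_inl, Sum.elim_inr, Subtype.mk.injEq, Prod.mk.injEq] at h
    · rw [h.1, Subtype.ext h.2.2]
    · exact (b'.ne_zero h.2.1.symm).elim
    · exact (b.ne_zero h.2.1).elim
    · rw [Units.ext h.2.1, h.2.2]
  · rintro ⟨⟨a, b, i⟩, h⟩
    rcases eq_or_ne b 0 with rfl | hb
    · exact ⟨Sum.inl (a, ⟨i, by simpa using h⟩), rfl⟩
    · refine ⟨Sum.inr (Units.mk0 b hb, i), Subtype.ext (Prod.ext ?_ rfl)⟩
      simp only [Sum.elim_inr, Units.val_inv_eq_inv_val, Units.val_mk0]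
      field_simp
      linear_combination -h

end Counting

section SingularVector

open MvPolynomial

theorem exists_mvPolynomial_eval_eq_quadraticForm {R M ι : Type*} [CommRing R] [AddCommGroup M]
    [Module R M] [Finite ι] (b : Basis ι R M) (Q : QuadraticForm R M) :
    ∃ f : MvPolynomial ι R, f.totalDegree ≤ 2 ∧ ∀ x, eval x f = Q (b.equivFun.symm x) := by
  have := Fintype.ofFinite ι
  have := Module.Free.of_basis b
  obtain ⟨B, rfl⟩ := LinearMap.BilinMap.toQuadraticMap_surjective Q
  refine ⟨∑ i, ∑ j, C (B (b i) (b j)) * (X i * X j), ?_, fun x => ?_⟩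
  · refine IsHomogeneous.totalDegree_le <| IsHomogeneous.sum _ _ _ fun i _ =>
      IsHomogeneous.sum _ _ _ fun j _ => ?_
    exact ((isHomogeneous_X R i).mul (isHomogeneous_X R j)).C_mul _
  · simp only [Basis.equivFun_symm_apply, LinearMap.BilinMap.toQuadraticMap_apply, map_sum,
      LinearMap.sum_apply, map_smul, LinearMap.smul_apply, map_mul, eval_C, eval_X, smul_eq_mul,
      Finset.mul_sum]
    rw [Finset.sum_comm]
    exact Finset.sum_congr rfl fun i _ => Finset.sum_congr rfl fun j _ => by ring

theorem exists_ne_zero_quadraticForm_eq_zero [Finite F] (Q : QuadraticForm F V)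
    (hV : 2 < finrank F V) : ∃ v ≠ 0, Q v = 0 := by
  classical
  have := Fintype.ofFinite F
  have : Module.Finite F V := Module.finite_of_finrank_pos (by omega)
  let b := Module.finBasis F V
  obtain ⟨f, hdeg, hf⟩ := exists_mvPolynomial_eval_eq_quadraticForm b Q
  obtain ⟨p, _⟩ := CharP.exists F
  have hdvd : p ∣ Fintype.card {x // eval x f = 0} :=
    char_dvd_card_solutions p (hdeg.trans_lt (by simpa using hV))
  have hzero : eval 0 f = 0 := by rw [hf, map_zero, map_zero]
  have hone_lt : 1 < Fintype.card {x // eval x f = 0} :=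
    (CharP.char_is_prime F p).one_lt.trans_le
      (Nat.le_of_dvd (Fintype.card_pos_iff.2 ⟨⟨0, hzero⟩⟩) hdvd)
  obtain ⟨⟨x, hx⟩, hne⟩ := Fintype.exists_ne_of_one_lt_card hone_lt ⟨0, hzero⟩
  refine ⟨b.equivFun.symm x, ?_, (hf x).symm.trans hx⟩
  exact (LinearEquiv.map_ne_zero_iff _).2 fun hx0 => hne (Subtype.ext hx0)

end SingularVector

theorem totallySingular_bot (Q : QuadraticForm F V) : TotallySingular Q ⊥ := by
  rintro v rfl
  exact map_zero Q

theorem TotallySingular.polar_eq_zero {Q : QuadraticForm F V} {W : Submodule F V}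
    (hW : TotallySingular Q W) {x y : V} (hx : x ∈ W) (hy : y ∈ W) :
    QuadraticMap.polar Q x y = 0 := by
  rw [QuadraticMap.polar, hW _ (W.add_mem hx hy), hW _ hx, hW _ hy, sub_zero, sub_zero]

/-- `v, w` is a hyperbolic pair of `Q` lying in the subspace `X`. -/
structure IsHyperbolicPair (Q : QuadraticForm F V) (X : Submodule F V) (v w : V) : Prop where
  left_mem : v ∈ X
  right_mem : w ∈ X
  map_left : Q v = 0
  map_right : Q w = 0
  polar_left_right : QuadraticMap.polar Q v w = 1

/-- The orthogonal complement of `{v, w}` in the subspace `X`, with respect to the polar form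
of `Q`. For a hyperbolic pair it is the other summand of `X` beside the hyperbolic line. -/
def orthogonalIn (Q : QuadraticForm F V) (X : Submodule F V) (v w : V) : Submodule F V :=
  X ⊓ (LinearMap.ker (Q.polarBilin v) ⊓ LinearMap.ker (Q.polarBilin w))

/-- The set of totally singular subspaces of dimension `k` contained in `X`; for `X`
nondegenerate of dimension `2k + 1` these are the generators of the parabolic quadric of `X`. -/
def generatorsIn (Q : QuadraticForm F V) (X : Submodule F V) (k : ℕ) : Set (Submodule F V) :=
  {g | g ≤ X ∧ IsGenerator Q k g}

section ParabolicQuadric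

variable {Q : QuadraticForm F V} {X : Submodule F V} {v w x : V}

theorem mem_orthogonalIn : x ∈ orthogonalIn Q X v w ↔
    x ∈ X ∧ QuadraticMap.polar Q v x = 0 ∧ QuadraticMap.polar Q w x = 0 := by
  simp [orthogonalIn]

theorem NondegOn.exists_isHyperbolicPair (hX : NondegOn Q X) (hv : v ∈ X) (hv0 : v ≠ 0)
    (hQv : Q v = 0) : ∃ w, IsHyperbolicPair Q X v w := by
  obtain ⟨u, hu, hne⟩ : ∃ u ∈ X, QuadraticMap.polar Q v u ≠ 0 := by
    by_contra! h
    exact hv0 (hX v hv hQv h)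
  set c := QuadraticMap.polar Q v u with hc
  -- Rescale `u` so that it pairs to `1` with `v`, then subtract the multiple of `v` that makes it
  -- singular.
  refine ⟨c⁻¹ • u - (c⁻¹ ^ 2 * Q u) • v, hv,
    X.sub_mem (X.smul_mem _ hu) (X.smul_mem _ hv), hQv, ?_, ?_⟩
  · rw [sub_eq_add_neg, ← neg_smul, QuadraticMap.map_add (⇑Q), QuadraticMap.map_smul,
      QuadraticMap.map_smul, hQv, QuadraticMap.polar_smul_left, QuadraticMap.polar_smul_right,
      QuadraticMap.polar_comm, ← hc]
    simp only [smul_eq_mul]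
    field_simp
    ring
  · rw [QuadraticMap.polar_sub_right, QuadraticMap.polar_smul_right,
      QuadraticMap.polar_smul_right, QuadraticMap.polar_self, hQv, ← hc]
    simp [hne]

namespace IsHyperbolicPair

theorem polar_left_left (h : IsHyperbolicPair Q X v w) : QuadraticMap.polar Q v v = 0 := by
  rw [QuadraticMap.polar_self, h.map_left, smul_zero]

theorem polar_right_right (h : IsHyperbolicPair Q X v w) : QuadraticMap.polar Q w w = 0 := by
  rw [QuadraticMap.polar_self, h.map_right, smul_zero]

theorem polar_right_left (h : IsHyperbolicPair Q X v w) : QuadraticMap.polar Q w v = 1 := by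
  rw [QuadraticMap.polar_comm, h.polar_left_right]

theorem sub_sub_mem_orthogonalIn (h : IsHyperbolicPair Q X v w) (hx : x ∈ X) :
    x - QuadraticMap.polar Q w x • v - QuadraticMap.polar Q v x • w ∈ orthogonalIn Q X v w := by
  refine mem_orthogonalIn.2
    ⟨X.sub_mem (X.sub_mem hx (X.smul_mem _ h.left_mem)) (X.smul_mem _ h.right_mem), ?_, ?_⟩ <;>
  simp [-QuadraticMap.polar_self, h.polar_left_left, h.polar_right_right, h.polar_right_left,
    h.polar_left_right]

/-- The decomposition of `X` into the hyperbolic line of `v, w`, with coordinates in `F × F`,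
and its orthogonal complement. -/
def prodEquiv (h : IsHyperbolicPair Q X v w) : (F × F × orthogonalIn Q X v w) ≃ₗ[F] X where
  toFun t := ⟨t.1 • v + t.2.1 • w + t.2.2, X.add_mem
    (X.add_mem (X.smul_mem _ h.left_mem) (X.smul_mem _ h.right_mem)) (mem_orthogonalIn.1 t.2.2.2).1⟩
  map_add' s t := by
    ext
    simp only [Prod.fst_add, Prod.snd_add, Submodule.coe_add, add_smul]
    abel
  map_smul' c t := by
    ext
    simp [smul_smul]
  invFun x :=
    (QuadraticMap.polar Q w x, QuadraticMap.polar Q v x, ⟨_, h.sub_sub_mem_orthogonalIn x.2⟩)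
  left_inv := by
    rintro ⟨a, b, y, hy⟩
    obtain ⟨-, hvy, hwy⟩ := mem_orthogonalIn.1 hy
    have hw : QuadraticMap.polar Q w (a • v + b • w + y) = a := by
      simp [-QuadraticMap.polar_self, h.polar_right_left, h.polar_right_right, hwy]
    have hv : QuadraticMap.polar Q v (a • v + b • w + y) = b := by
      simp [-QuadraticMap.polar_self, h.polar_left_left, h.polar_left_right, hvy]
    simp only [hv, hw, Prod.mk.injEq, Subtype.mk.injEq, true_and]
    abel
  right_inv x := by
    ext
    simp

theorem map_prodEquiv (h : IsHyperbolicPair Q X v w) (t : F × F × orthogonalIn Q X v w) :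
    Q (h.prodEquiv t) = t.1 * t.2.1 + Q t.2.2 := by
  obtain ⟨a, b, y, hy⟩ := t
  obtain ⟨-, hvy, hwy⟩ := mem_orthogonalIn.1 hy
  change Q (a • v + b • w + y) = _
  simp only [QuadraticMap.map_add (⇑Q), QuadraticMap.map_smul, QuadraticMap.polar_add_left,
    QuadraticMap.polar_smul_left, QuadraticMap.polar_smul_right, h.map_left, h.map_right,
    h.polar_left_right, hvy, hwy]
  simp [mul_comm]

theorem finrank_orthogonalIn [FiniteDimensional F X] (h : IsHyperbolicPair Q X v w) :
    finrank F (orthogonalIn Q X v w) + 2 = finrank F X := by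
  have : FiniteDimensional F (orthogonalIn Q X v w) :=
    Submodule.finiteDimensional_of_le inf_le_left
  rw [← h.prodEquiv.finrank_eq, finrank_prod, finrank_prod, finrank_self]
  omega

theorem nondegOn_orthogonalIn (h : IsHyperbolicPair Q X v w) (hX : NondegOn Q X) :
    NondegOn Q (orthogonalIn Q X v w) := by
  intro y hy hQy hortho
  obtain ⟨hyX, hvy, hwy⟩ := mem_orthogonalIn.1 hy
  refine hX y hyX hQy fun x hx => ?_
  simpa [QuadraticMap.polar_comm Q y, hvy, hwy] using hortho _ (h.sub_sub_mem_orthogonalIn hx)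

theorem natCard_singular [Finite F] [Finite X] (h : IsHyperbolicPair Q X v w) :
    Nat.card {x : X // Q x = 0} =
      Nat.card F * Nat.card {y : orthogonalIn Q X v w // Q y = 0} +
        (Nat.card F - 1) * Nat.card (orthogonalIn Q X v w) := by
  have : Finite (orthogonalIn Q X v w) :=
    ((X : Set V).toFinite.subset (inf_le_left : orthogonalIn Q X v w ≤ X)).to_subtype
  rw [← natCard_mul_add_eq_zero]
  exact Nat.card_congr (h.prodEquiv.toEquiv.subtypeEquiv fun t => by
    rw [← h.map_prodEquiv]; rfl).symm

theorem left_ne_zero (h : IsHyperbolicPair Q X v w) : v ≠ 0 := by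
  rintro rfl
  simpa using h.polar_left_right

theorem disjoint_span (h : IsHyperbolicPair Q X v w) {U : Submodule F V}
    (hU : U ≤ orthogonalIn Q X v w) : Disjoint U (F ∙ v) :=
  (Submodule.disjoint_span_singleton' h.left_ne_zero).2 fun hv =>
    one_ne_zero (h.polar_right_left.symm.trans (mem_orthogonalIn.1 (hU hv)).2.2)

theorem sup_span_inf_orthogonalIn (h : IsHyperbolicPair Q X v w) {U : Submodule F V}
    (hU : U ≤ orthogonalIn Q X v w) : (U ⊔ F ∙ v) ⊓ orthogonalIn Q X v w = U := by
  rw [sup_inf_assoc_of_le _ hU, (h.disjoint_span le_rfl).symm.eq_bot, sup_bot_eq]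

theorem inf_orthogonalIn_sup_span (h : IsHyperbolicPair Q X v w) {g : Submodule F V}
    (hgX : g ≤ X) (hg : TotallySingular Q g) (hv : v ∈ g) :
    g ⊓ orthogonalIn Q X v w ⊔ F ∙ v = g := by
  refine le_antisymm (sup_le inf_le_left (g.span_singleton_le_iff_mem v |>.2 hv)) fun x hx => ?_
  have hrem := h.sub_sub_mem_orthogonalIn (hgX hx)
  rw [hg.polar_eq_zero hv hx, zero_smul, sub_zero] at hrem
  exact Submodule.mem_sup.2 ⟨_, ⟨g.sub_mem hx (g.smul_mem _ hv), hrem⟩, _,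
    Submodule.smul_mem _ _ (Submodule.mem_span_singleton_self v), sub_add_cancel _ _⟩

theorem finrank_sup_span (h : IsHyperbolicPair Q X v w) {U : Submodule F V}
    [FiniteDimensional F U] (hU : U ≤ orthogonalIn Q X v w) :
    finrank F (U ⊔ F ∙ v : Submodule F V) = finrank F U + 1 := by
  rw [← finrank_span_singleton (K := F) h.left_ne_zero,
    ← Submodule.finrank_sup_add_finrank_inf_eq, (h.disjoint_span hU).eq_bot, finrank_bot, add_zero]

theorem totallySingular_sup_span (h : IsHyperbolicPair Q X v w) {U : Submodule F V}
    (hUX : U ≤ orthogonalIn Q X v w) (hU : TotallySingular Q U) :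
    TotallySingular Q (U ⊔ F ∙ v) := by
  intro x hx
  obtain ⟨y, hy, z, hz, rfl⟩ := Submodule.mem_sup.1 hx
  obtain ⟨c, rfl⟩ := Submodule.mem_span_singleton.1 hz
  rw [QuadraticMap.map_add (⇑Q), QuadraticMap.map_smul, QuadraticMap.polar_smul_right,
    QuadraticMap.polar_comm, (mem_orthogonalIn.1 (hUX hy)).2.1, hU y hy, h.map_left]
  simp

theorem ncard_generatorsIn_mem_left [FiniteDimensional F X] (h : IsHyperbolicPair Q X v w)
    (k : ℕ) : {g ∈ generatorsIn Q X (k + 1) | v ∈ g}.ncard =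
      (generatorsIn Q (orthogonalIn Q X v w) k).ncard := by
  have finiteDimensional {U : Submodule F V} (hU : U ≤ orthogonalIn Q X v w) :
      FiniteDimensional F U := Submodule.finiteDimensional_of_le (hU.trans inf_le_left)
  symm
  refine Set.ncard_congr (fun g _ => g ⊔ F ∙ v) ?_ ?_ ?_
  · rintro g ⟨hgY, hg, hdim⟩
    have := finiteDimensional hgY
    refine ⟨⟨sup_le (hgY.trans inf_le_left) ?_, h.totallySingular_sup_span hgY hg, ?_⟩, ?_⟩
    · exact (X.span_singleton_le_iff_mem v).2 h.left_mem
    · rw [h.finrank_sup_span hgY, hdim]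
    · exact Submodule.mem_sup_right (Submodule.mem_span_singleton_self v)
  · rintro g g' ⟨hg, -⟩ ⟨hg', -⟩ heq
    rw [← h.sup_span_inf_orthogonalIn hg, ← h.sup_span_inf_orthogonalIn hg', heq]
  · rintro g ⟨⟨hgX, hg, hdim⟩, hv⟩
    have hsup := h.inf_orthogonalIn_sup_span hgX hg hv
    have := finiteDimensional (U := g ⊓ orthogonalIn Q X v w) inf_le_right
    have hrank := h.finrank_sup_span (U := g ⊓ orthogonalIn Q X v w) inf_le_right
    rw [hsup, hdim] at hrank
    exact ⟨_, ⟨inf_le_right, fun x hx => hg x hx.1, (Nat.succ_injective hrank).symm⟩, hsup⟩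

end IsHyperbolicPair

theorem NondegOn.exists_ncard_generatorsIn_mem_eq [FiniteDimensional F X] (hX : NondegOn Q X)
    (hv : v ∈ X) (hv0 : v ≠ 0) (hQv : Q v = 0) : ∃ Y : Submodule F V, NondegOn Q Y ∧
      finrank F Y + 2 = finrank F X ∧
      ∀ k, {g ∈ generatorsIn Q X (k + 1) | v ∈ g}.ncard = (generatorsIn Q Y k).ncard :=
  have ⟨_, h⟩ := hX.exists_isHyperbolicPair hv hv0 hQv
  ⟨_, h.nondegOn_orthogonalIn hX, h.finrank_orthogonalIn, h.ncard_generatorsIn_mem_left⟩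

theorem NondegOn.eq_zero_of_finrank_eq_one (hX : NondegOn Q X) (hdim : finrank F X = 1)
    (hx : x ∈ X) (hQx : Q x = 0) : x = 0 := by
  by_contra hx0
  refine hx0 (hX x hx hQx fun y hy => ?_)
  obtain ⟨c, hc⟩ := (finrank_eq_one_iff_of_nonzero' (⟨x, hx⟩ : X) (by simpa using hx0)).1 hdim
    ⟨y, hy⟩
  obtain rfl : c • x = y := congrArg Subtype.val hc
  rw [QuadraticMap.polar_smul_right, QuadraticMap.polar_self, hQx, smul_zero, smul_zero]

theorem NondegOn.natCard_singular [Finite F] {k : ℕ} (hX : NondegOn Q X)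
    (hdim : finrank F X = 2 * k + 1) :
    Nat.card {x : X // Q x = 0} = Nat.card F ^ (2 * k) := by
  induction k generalizing X with
  | zero =>
    rw [mul_zero, pow_zero, Nat.card_eq_one_iff_unique]
    refine ⟨⟨fun x y => Subtype.ext <| Subtype.ext ?_⟩, ⟨⟨0, map_zero Q⟩⟩⟩
    rw [hX.eq_zero_of_finrank_eq_one hdim x.1.2 x.2, hX.eq_zero_of_finrank_eq_one hdim y.1.2 y.2]
  | succ k ih =>
    have : FiniteDimensional F X := finite_of_finrank_pos (by omega)
    have : Finite X := finite_of_finite F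
    obtain ⟨⟨v, hv⟩, hv0, hQv⟩ := exists_ne_zero_quadraticForm_eq_zero (Q.comp X.subtype)
      (by omega)
    obtain ⟨w, h⟩ := hX.exists_isHyperbolicPair hv (by simpa using hv0) hQv
    have hdimY : finrank F (orthogonalIn Q X v w) = 2 * k + 1 := by
      have := h.finrank_orthogonalIn
      omega
    have : FiniteDimensional F (orthogonalIn Q X v w) := finite_of_finrank_pos (by omega)
    rw [h.natCard_singular, ih (h.nondegOn_orthogonalIn hX) hdimY,
      natCard_eq_pow_finrank (K := F) (V := orthogonalIn Q X v w), hdimY]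
    obtain ⟨r, hr⟩ := Nat.exists_eq_add_one_of_ne_zero (Nat.card_pos (α := F)).ne'
    rw [hr, Nat.add_sub_cancel]
    ring

theorem NondegOn.ncard_singular_sdiff_zero [Finite F] {k : ℕ} (hX : NondegOn Q X)
    (hdim : finrank F X = 2 * k + 1) :
    ({x ∈ X | Q x = 0} \ {0}).ncard = (Nat.card F ^ k + 1) * (Nat.card F ^ k - 1) := by
  have hzero : (0 : V) ∈ {x ∈ X | Q x = 0} := ⟨X.zero_mem, map_zero Q⟩
  rw [Set.ncard_sdiff_singleton_of_mem hzero, ← Nat.card_coe_set_eq, Set.coe_ofPred,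
    ← Nat.card_congr (Equiv.subtypeSubtypeEquivSubtypeInter (· ∈ X) (Q · = 0)),
    hX.natCard_singular hdim, mul_comm, pow_mul, ← Nat.sq_sub_sq, one_pow]

theorem ncard_submodule_sdiff_zero [Finite F] (U : Submodule F V) [FiniteDimensional F U] :
    ((U : Set V) \ {0}).ncard = Nat.card F ^ finrank F U - 1 := by
  rw [Set.ncard_sdiff_singleton_of_mem U.zero_mem, ← natCard_eq_pow_finrank (K := F)]
  rfl

theorem generatorsIn_zero [FiniteDimensional F X] : generatorsIn Q X 0 = {⊥} := by
  ext g
  refine ⟨fun ⟨hgX, _, hdim⟩ => ?_, ?_⟩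
  · have := Submodule.finiteDimensional_of_le hgX
    exact Submodule.finrank_eq_zero.1 hdim
  · rintro rfl
    exact ⟨bot_le, totallySingular_bot Q, finrank_bot F V⟩

theorem NondegOn.ncard_generatorsIn [Finite F] {k : ℕ} (hX : NondegOn Q X)
    (hdim : finrank F X = 2 * k + 1) :
    (generatorsIn Q X k).ncard = ∏ i ∈ Finset.range k, (Nat.card F ^ (i + 1) + 1) := by
  induction k generalizing X with
  | zero =>
    have : FiniteDimensional F X := finite_of_finrank_pos (by omega)
    rw [generatorsIn_zero, Set.ncard_singleton, Finset.prod_range_zero]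
  | succ k ih =>
    have : FiniteDimensional F X := finite_of_finrank_pos (by omega)
    have : Finite X := finite_of_finite F
    have hthrough : ∀ v ∈ {x ∈ X | Q x = 0} \ {0},
        {g ∈ generatorsIn Q X (k + 1) | v ∈ g}.ncard =
          ∏ i ∈ Finset.range k, (Nat.card F ^ (i + 1) + 1) := by
      rintro v ⟨⟨hv, hQv⟩, hv0⟩
      obtain ⟨Y, hY, hdimY, hcard⟩ := hX.exists_ncard_generatorsIn_mem_eq hv hv0 hQv
      rw [hcard, ih hY (by omega)]
    have hon : ∀ g ∈ generatorsIn Q X (k + 1),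
        {x ∈ {x ∈ X | Q x = 0} \ {0} | x ∈ g}.ncard = Nat.card F ^ (k + 1) - 1 := by
      rintro g ⟨hgX, hg, hdimg⟩
      have : FiniteDimensional F g := Submodule.finiteDimensional_of_le hgX
      rw [← hdimg, ← ncard_submodule_sdiff_zero]
      congr 1
      ext x
      exact ⟨fun ⟨⟨_, hx0⟩, hx⟩ => ⟨hx, hx0⟩, fun ⟨hx, hx0⟩ => ⟨⟨⟨hgX hx, hg x hx⟩, hx0⟩, hx⟩⟩
    have hcount := ncard_mul_eq_ncard_mul
      (((X : Set V).toFinite.subset fun _ hx => hx.1).subset Set.sdiff_subset)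
      ((finite_setOf_submodule_le X).subset fun _ hg => hg.1) (fun x g => x ∈ g) hthrough hon
    rw [hX.ncard_singular_sdiff_zero hdim] at hcount
    have hpos : 0 < Nat.card F ^ (k + 1) - 1 :=
      Nat.sub_pos_of_lt (Nat.one_lt_pow k.succ_ne_zero Finite.one_lt_card)
    refine Nat.eq_of_mul_eq_mul_right hpos ?_
    rw [← hcount, Finset.prod_range_succ]
    ring

/-- `S` is an `m`-ovoid of the quadric which `Q` cuts on `X`, where `n` is the dimension of its
generators: a set of singular points of `X` meeting every generator in exactly `m` points. -/
def IsMOvoidOn (Q : QuadraticForm F V) (n : ℕ) (X : Submodule F V) (m : ℕ)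
    (S : Set (Submodule F V)) : Prop :=
  (∀ P ∈ S, IsSingularPoint Q P ∧ P ≤ X) ∧
  ∀ g ∈ generatorsIn Q X n, {P ∈ S | P ≤ g}.ncard = m

theorem IsMOvoidOn.ncard_eq [Finite F] {n m : ℕ} {S : Set (Submodule F V)}
    (hS : IsMOvoidOn Q n X m S) (hn : n ≠ 0) (hX : NondegOn Q X)
    (hdim : finrank F X = 2 * n + 1) : S.ncard = m * (Nat.card F ^ n + 1) := by
  obtain ⟨k, rfl⟩ := Nat.exists_eq_add_one_of_ne_zero hn
  have : FiniteDimensional F X := finite_of_finrank_pos (by omega)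
  have : Finite X := finite_of_finite F
  have hthrough : ∀ P ∈ S, {g ∈ generatorsIn Q X (k + 1) | P ≤ g}.ncard =
      ∏ i ∈ Finset.range k, (Nat.card F ^ (i + 1) + 1) := by
    intro P hP
    obtain ⟨⟨v, hv0, hQv, rfl⟩, hPX⟩ := hS.1 P hP
    simp only [Submodule.span_singleton_le_iff_mem] at hPX ⊢
    obtain ⟨Y, hY, hdimY, hcard⟩ := hX.exists_ncard_generatorsIn_mem_eq hPX hv0 hQv
    rw [hcard, hY.ncard_generatorsIn (by omega)]
  have hcount := ncard_mul_eq_ncard_mul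
    ((finite_setOf_submodule_le X).subset fun P hP => (hS.1 P hP).2)
    ((finite_setOf_submodule_le X).subset fun _ hg => hg.1) (fun P g => P ≤ g) hthrough hS.2
  rw [hX.ncard_generatorsIn hdim, Finset.prod_range_succ] at hcount
  have hpos : 0 < ∏ i ∈ Finset.range k, (Nat.card F ^ (i + 1) + 1) :=
    Finset.prod_pos fun _ _ => Nat.succ_pos _
  refine Nat.eq_of_mul_eq_mul_right hpos ?_
  rw [hcount]
  ring

theorem IsRelativeMOvoid.isMOvoidOn {n m : ℕ} {H : Submodule F V} {R : Set (Submodule F V)}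
    (hR : IsRelativeMOvoid Q n H m R) (hX : ∀ g ∈ generatorsIn Q X n, ¬ g ≤ H) :
    IsMOvoidOn Q n X m {P ∈ R | P ≤ X} := by
  refine ⟨fun P hP => ⟨(hR.1 P hP.1).1, hP.2⟩, fun g hg => ?_⟩
  rw [← hR.2 g hg.2 (hX g hg)]
  congr 1
  ext P
  exact ⟨fun ⟨⟨hPR, _⟩, hPg⟩ => ⟨hPR, hPg⟩, fun ⟨hPR, hPg⟩ => ⟨⟨hPR, hPg.trans hg.1⟩, hPg⟩⟩

end ParabolicQuadric

theorem statement_2_general [Finite F] {n m : ℕ} (Q : QuadraticForm F V) {H H' : Submodule F V}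
    (hdim : finrank F H' = 2 * n + 1) (hnd : NondegOn Q H')
    (hsec : ∀ W ≤ H ⊓ H', TotallySingular Q W → finrank F W < n) {R : Set (Submodule F V)}
    (hR : IsRelativeMOvoid Q n H m R) :
    {P ∈ R | P ≤ H'}.ncard = m * (Nat.card F ^ n + 1) := by
  have hn : n ≠ 0 := (Nat.zero_lt_of_lt (hsec ⊥ bot_le (totallySingular_bot Q))).ne'
  have hgen : ∀ g ∈ generatorsIn Q H' n, ¬ g ≤ H := fun g ⟨hgH', hg, hdimg⟩ hgH =>
    (hsec g (le_inf hgH hgH') hg).ne hdimg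
  exact (hR.isMOvoidOn hgen).ncard_eq hn hnd hdim

/-- If the parabolic section `Q' = Q ∩ H'` meets `𝒬` in an elliptic quadric
`Q⁻(2n−1,q)`, then a relative `m`-ovoid has exactly `m(qⁿ + 1)` points in `H'`. -/
theorem statement_2
    (q n : ℕ) [Fintype F] (hq : Fintype.card F = q) (hn : 2 ≤ n)
    (hV : finrank F V = 2 * n + 2)
    (Q : QuadraticForm F V) (hQnd : Nondeg Q) (hQw : HasWittIndex Q n)
    (H : Submodule F V) (hH : finrank F H = 2 * n + 1) (hHnd : NondegOn Q H)
    (H' : Submodule F V) (hH'dim : finrank F H' = 2 * n + 1) (hH'nd : NondegOn Q H')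
    (hsecnd : NondegOn Q (H ⊓ H')) (hsecw : HasWittIndexOn Q (H ⊓ H') (n - 1))
    (m : ℕ) (R : Set (Submodule F V)) (hR : IsRelativeMOvoid Q n H m R) :
    {P ∈ R | P ≤ H'}.ncard = m * (q ^ n + 1) := by
  rw [← hq, ← Nat.card_eq_fintype_card]
  refine statement_2_general Q hH'dim hH'nd (fun W hWle hW => ?_) hR
  exact (hsecw.1 W hWle hW).trans_lt (by omega)
end
end

section
/- Let H' ≤ V be another hyperplane such that the restriction of Q to H' is nondegenerate (so the singular points in H' form a parabolic quadric Q'), and suppose the restriction of Q to H ∩ H' is degenerate, i.e. there exists a nonzero v ∈ H ∩ H' with Q(v) = 0 and B(v,w) = 0 for all w ∈ H ∩ H' (so the section 𝒬 ∩ Q' is a cone). If R is a relative m-ovoid of Q⁻(2n+1,q) with respect to 𝒬, then the number of points of R contained in H' equals m·qⁿ. -/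
noncomputable section

open Module

variable {F V : Type*} [Field F] [AddCommGroup V] [Module F V]

/-- The restriction of `Q` to the subspace `U` is degenerate. -/
def DegenOn (Q : QuadraticForm F V) (U : Submodule F V) : Prop :=
  ∃ v ∈ U, v ≠ 0 ∧ Q v = 0 ∧ ∀ w ∈ U, QuadraticMap.polar (⇑Q) v w = 0

/-!
Let `v` span the vertex of the cone, so that `H ∩ H' = v^⊥ ∩ H'`. A point of `R` in `H'` is then not
orthogonal to `v`, hence has a unique representative in the affine hyperplane
`A = {x ∈ H' | B(v, x) = 1}` of `H'`. By Chevalley–Warning there is a totally singular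
`n`-dimensional `g ≤ H'` through `v`, and `A` is a union of cosets of `g`. Every coset contains a
singular vector `x`, since moving along `v` changes `Q` at unit speed on `A`, and its singular
vectors are exactly the representatives in `A` of points of the generator `⟨x, g ∩ x^⊥⟩`, which
does not lie in `H`. So each of the `q ^ (2n) / q ^ n` cosets in `A` accounts for `m` points of `R`.
-/

section LinearAlgebra

theorem finrank_inf_ker_add_one [FiniteDimensional F V] {W : Submodule F V} {f : V →ₗ[F] F}
    {w : V} (hw : w ∈ W) (hfw : f w ≠ 0) :
    finrank F (W ⊓ f.ker : Submodule F V) + 1 = finrank F W := by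
  have hf : f ≠ 0 := by
    rintro rfl
    exact hfw rfl
  have hsup : W ⊔ f.ker = ⊤ := by
    rw [eq_top_iff, ← f.span_singleton_sup_ker_eq_top hfw]
    exact sup_le_sup_right (by simpa using hw) _
  have hdim := Submodule.finrank_sup_add_finrank_inf_eq W f.ker
  have hker := Module.Dual.finrank_ker_add_one_of_ne_zero hf
  rw [hsup, finrank_top] at hdim
  omega

theorem ncard_affine_slice_mul_card [FiniteDimensional F V] {U : Submodule F V}
    {f : V →ₗ[F] F} {w : V} (hw : w ∈ U) (hfw : f w ≠ 0) (c : F) :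
    {x | x ∈ U ∧ f x = c}.ncard * Nat.card F = Nat.card F ^ finrank F U := by
  obtain ⟨x₀, hx₀U, hfx₀⟩ : ∃ x ∈ U, f x = c :=
    ⟨(c / f w) • w, U.smul_mem _ hw, by simp [hfw]⟩
  have htranslate : {x | x ∈ U ∧ f x = c} = (x₀ + ·) '' (U ⊓ f.ker : Submodule F V) := by
    ext x
    rw [Set.image_add_left]
    simp [Submodule.add_mem_iff_right U (U.neg_mem hx₀U), hfx₀, neg_add_eq_zero, @eq_comm F c]
  rw [htranslate, Set.ncard_image_of_injective _ (add_right_injective x₀), ← Nat.card_coe_set_eq,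
    SetLike.coe_sort_coe, Module.natCard_eq_pow_finrank (K := F), ← pow_succ,
    finrank_inf_ker_add_one hw hfw]

theorem finrank_le_finrank_inf_orthogonal_add [FiniteDimensional F V]
    (B : LinearMap.BilinForm F V) (U M : Submodule F V) :
    finrank F U ≤ finrank F (U ⊓ B.orthogonal M : Submodule F V) + finrank F M := by
  have horth := B.finrank_add_finrank_orthogonal' M
  have hinf := Submodule.finrank_sup_add_finrank_inf_eq U (B.orthogonal M)
  have hsup := (U ⊔ B.orthogonal M).finrank_le
  omega

theorem mem_iff_apply_eq_zero_of_isCoatom {H U : Submodule F V} (hH : IsCoatom H)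
    {f : V →ₗ[F] F} (hf : H ⊓ U ≤ f.ker) (hU : ¬ U ≤ f.ker) {w : V} (hw : w ∈ U) :
    w ∈ H ↔ f w = 0 := by
  have hUH : ¬ U ≤ H := fun h => hU (inf_eq_right.2 h ▸ hf)
  have hcov : H ⊓ U ⋖ U := by
    apply inf_covBy_of_covBy_sup_left
    rw [sup_comm, hH.2 _ (right_lt_sup.2 hUH)]
    exact hH.covBy_top
  have heq : H ⊓ U = f.ker ⊓ U :=
    (hcov.wcovBy.eq_or_eq (le_inf hf inf_le_right) inf_le_right).elim Eq.symm fun h =>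
      (hU (inf_eq_right.1 h)).elim
  simpa [hw] using SetLike.ext_iff.1 heq w

theorem isCoatom_of_finrank_add_one_eq [FiniteDimensional F V] {H : Submodule F V}
    (hH : finrank F H + 1 = finrank F V) : IsCoatom H := by
  refine ⟨fun htop => ?_, fun W hHW => Submodule.eq_top_of_finrank_eq ?_⟩
  · rw [htop, finrank_top] at hH
    omega
  · have hlt := Submodule.finrank_lt_finrank_of_lt hHW
    have hle := W.finrank_le
    omega

end LinearAlgebra

section Counting

theorem ncard_mul_eq_ncard_mul_card_of_cosets {G : Type*} [AddCommGroup G] [Finite G]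
    (g : AddSubgroup G) {A T : Set G} {m : ℕ} (hTA : T ⊆ A)
    (hA : ∀ x ∈ A, ∀ d ∈ g, x - d ∈ A)
    (hm : ∀ x ∈ A, {y ∈ T | y - x ∈ g}.ncard = m) :
    A.ncard * m = T.ncard * Nat.card g := by
  classical
  have := Fintype.ofFinite G
  rw [Set.ncard_eq_toFinset_card' A, Set.ncard_eq_toFinset_card' T]
  refine Finset.card_mul_eq_card_mul (fun x y => y - x ∈ g) (fun x hx => ?_) fun y hy => ?_
  · rw [← hm x (by simpa using hx), Set.ncard_eq_toFinset_card']
    congr 1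
    ext y
    simp [Finset.bipartiteAbove]
  · have hyA : y ∈ A := hTA (by simpa using hy)
    have hcoset : (↑(A.toFinset.bipartiteBelow (fun x y => y - x ∈ g) y) : Set G) =
        (y - ·) '' (g : Set G) := by
      ext x
      simp only [Finset.bipartiteBelow, Finset.coe_filter, Set.mem_toFinset, Set.mem_image,
        SetLike.mem_coe]
      constructor
      · rintro ⟨-, hx⟩
        exact ⟨y - x, hx, sub_sub_cancel y x⟩
      · rintro ⟨d, hd, rfl⟩
        exact ⟨hA y hyA d hd, by simpa using hd⟩
    rw [← Set.ncard_coe_finset, hcoset, Set.ncard_image_of_injective _ sub_right_injective,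
      ← Nat.card_coe_set_eq, SetLike.coe_sort_coe]

/-- The vectors of the affine hyperplane `f = 1` spanning a member of `S`: a set of normalised
representatives for the points in `S` not contained in the kernel of `f`. -/
def affineReps (f : V →ₗ[F] F) (S : Set (Submodule F V)) : Set V :=
  {y | f y = 1 ∧ Submodule.span F {y} ∈ S}

theorem ncard_affineReps {f : V →ₗ[F] F} {S : Set (Submodule F V)}
    (hS : ∀ P ∈ S, ∃ w, f w ≠ 0 ∧ P = Submodule.span F {w}) :
    (affineReps f S).ncard = S.ncard := by
  have himage : (fun y => Submodule.span F {y}) '' affineReps f S = S := by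
    refine Set.Subset.antisymm (Set.image_subset_iff.2 fun y hy => hy.2) fun P hP => ?_
    obtain ⟨w, hfw, rfl⟩ := hS P hP
    have hspan : Submodule.span F {(f w)⁻¹ • w} = Submodule.span F {w} :=
      Submodule.span_singleton_smul_eq (IsUnit.mk0 _ (inv_ne_zero hfw)) w
    exact ⟨(f w)⁻¹ • w, ⟨by simp [hfw], hspan ▸ hP⟩, hspan⟩
  have hinj : Set.InjOn (fun y => Submodule.span F {y}) (affineReps f S) := by
    intro y hy z hz hyz
    have hyspan : y ∈ Submodule.span F {z} := hyz.le (Submodule.mem_span_singleton_self y)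
    obtain ⟨c, rfl⟩ := Submodule.mem_span_singleton.1 hyspan
    have hc : c = 1 := by simpa [hz.1] using hy.1
    rw [hc, one_smul]
  rw [← himage, hinj.ncard_image, himage]

end Counting

section SingularVectors

theorem not_anisotropic_of_two_lt_finrank [Finite F] [FiniteDimensional F V]
    (Q : QuadraticForm F V) (hV : 2 < finrank F V) : ¬ Q.Anisotropic := by
  classical
  intro hQ
  have := Fintype.ofFinite F
  let b := finBasis F V
  let f : MvPolynomial (Fin (finrank F V)) F :=
    ∑ i, ∑ j, .C (Q.toBilin b (b i) (b j)) * (.X i * .X j)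
  have heval (x : Fin (finrank F V) → F) : f.eval x = Q (∑ i, x i • b i) := by
    conv_rhs => rw [← Q.toQuadraticMap_toBilin b]
    simp only [f, map_sum, map_mul, MvPolynomial.eval_C, MvPolynomial.eval_X,
      LinearMap.BilinMap.toQuadraticMap_apply, map_smul, LinearMap.sum_apply, LinearMap.smul_apply,
      smul_eq_mul]
    rw [Finset.sum_comm]
    refine Finset.sum_congr rfl fun j _ => ?_
    rw [Finset.mul_sum]
    exact Finset.sum_congr rfl fun i _ => by ring
  have hdeg : f.totalDegree ≤ 2 := by
    have hhom : f.IsHomogeneous 2 := .sum _ _ _ fun i _ => .sum _ _ _ fun j _ =>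
      ((MvPolynomial.isHomogeneous_X F i).mul (MvPolynomial.isHomogeneous_X F j)).C_mul _
    exact hhom.totalDegree_le
  obtain ⟨p, _⟩ := CharP.exists F
  have hdvd : p ∣ Fintype.card {x // f.eval x = 0} :=
    char_dvd_card_solutions p (by simpa using hdeg.trans_lt hV)
  have hunique : Fintype.card {x // f.eval x = 0} = 1 := by
    refine Fintype.card_eq_one_iff.2 ⟨⟨0, by rw [heval]; simp⟩, fun ⟨x, hx⟩ => Subtype.ext ?_⟩
    exact funext (Fintype.linearIndependent_iff.1 b.linearIndependent x (hQ _ (heval x ▸ hx)))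
  exact (CharP.char_is_prime F p).one_lt.ne' (Nat.dvd_one.1 (hunique ▸ hdvd))

theorem exists_singular_mem_notMem [Finite F] [FiniteDimensional F V] (Q : QuadraticForm F V)
    {M W : Submodule F V} (hMW : finrank F M + 2 < finrank F W) :
    ∃ x ∈ W, x ∉ M ∧ Q x = 0 := by
  obtain ⟨C, hC⟩ := Submodule.exists_isCompl M
  have hdimC := Submodule.finrank_add_eq_of_isCompl hC
  have hdimInf := Submodule.finrank_sup_add_finrank_inf_eq W C
  have hdimSup := (W ⊔ C).finrank_le
  have haniso := not_anisotropic_of_two_lt_finrank (Q.comp (W ⊓ C).subtype) (by omega)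
  simp only [QuadraticMap.Anisotropic, not_forall] at haniso
  obtain ⟨⟨x, hxW, hxC⟩, hQx, hx0⟩ := haniso
  exact ⟨x, hxW, fun hxM => hx0 (Subtype.ext (Submodule.disjoint_def.1 hC.disjoint x hxM hxC)), hQx⟩

end SingularVectors

section TotallySingular

variable {Q : QuadraticForm F V} {g M U : Submodule F V} {v x y : V} {n : ℕ}

theorem TotallySingular.polarBilin_eq_zero (hM : TotallySingular Q M) (hx : x ∈ M) (hy : y ∈ M) :
    Q.polarBilin x y = 0 := by
  simp [QuadraticMap.polar, hM _ hx, hM _ hy, hM _ (M.add_mem hx hy)]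

theorem totallySingular_span_singleton (hx : Q x = 0) :
    TotallySingular Q (Submodule.span F {x}) := by
  intro y hy
  obtain ⟨c, rfl⟩ := Submodule.mem_span_singleton.1 hy
  simp [QuadraticMap.map_smul, hx]

theorem TotallySingular.sup_span_singleton_s4 (hM : TotallySingular Q M) (hx : Q x = 0)
    (hperp : ∀ w ∈ M, Q.polarBilin w x = 0) : TotallySingular Q (M ⊔ Submodule.span F {x}) := by
  intro y hy
  obtain ⟨d, hd, z, hz, rfl⟩ := Submodule.mem_sup.1 hy
  obtain ⟨c, rfl⟩ := Submodule.mem_span_singleton.1 hz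
  have hdx : QuadraticMap.polar Q d x = 0 := hperp d hd
  simp [QuadraticMap.map_add, QuadraticMap.map_smul, hx, hM d hd, hdx]

theorem TotallySingular.exists_generator_ge [Finite F] [FiniteDimensional F V]
    (hM : TotallySingular Q M) (hMU : M ≤ U) (hMn : finrank F M ≤ n)
    (hnU : 2 * n + 1 ≤ finrank F U) : ∃ g, IsGenerator Q n g ∧ M ≤ g ∧ g ≤ U := by
  induction n, hMn using Nat.le_induction with
  | base => exact ⟨M, ⟨hM, rfl⟩, le_rfl, hMU⟩
  | succ k _ ih =>
    obtain ⟨g, ⟨hg, hgk⟩, hMg, hgU⟩ := ih (by omega)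
    have hdim := finrank_le_finrank_inf_orthogonal_add Q.polarBilin U g
    obtain ⟨x, ⟨hxU, hxperp⟩, hxg, hQx⟩ := exists_singular_mem_notMem Q
      (M := g) (W := U ⊓ LinearMap.BilinForm.orthogonal Q.polarBilin g) (by omega)
    refine ⟨g ⊔ Submodule.span F {x}, ⟨hg.sup_span_singleton_s4 hQx hxperp, ?_⟩,
      hMg.trans le_sup_left, sup_le hgU (by simpa using hxU)⟩
    rw [Submodule.finrank_sup_span_singleton hxg, hgk]

/-- The subspace `⟨x, g ∩ x^⊥⟩`. When `g` is a generator and `x` a singular vector with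
`g ≰ x^⊥`, it is the generator through `x` meeting `g` in a hyperplane of `g`. -/
def joinPerp (Q : QuadraticForm F V) (g : Submodule F V) (x : V) : Submodule F V :=
  g ⊓ (Q.polarBilin x).ker ⊔ Submodule.span F {x}

theorem mem_joinPerp_self : x ∈ joinPerp Q g x :=
  Submodule.mem_sup_right (Submodule.mem_span_singleton_self x)

theorem joinPerp_le (hgU : g ≤ U) (hx : x ∈ U) : joinPerp Q g x ≤ U :=
  sup_le (inf_le_left.trans hgU) (by simpa using hx)

theorem IsGenerator.joinPerp [FiniteDimensional F V] (hg : IsGenerator Q n g) (hv : v ∈ g)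
    (hQx : Q x = 0) (hvx : Q.polarBilin v x ≠ 0) : IsGenerator Q n (joinPerp Q g x) := by
  have hxv : Q.polarBilin x v ≠ 0 := by simpa [QuadraticMap.polar_comm] using hvx
  have hxg : x ∉ g ⊓ (Q.polarBilin x).ker := fun h => hvx (hg.1.polarBilin_eq_zero hv h.1)
  refine ⟨TotallySingular.sup_span_singleton_s4 (fun d hd => hg.1 d hd.1) hQx fun d hd => ?_, ?_⟩
  · simpa [QuadraticMap.polar_comm] using hd.2
  · rw [_root_.joinPerp, Submodule.finrank_sup_span_singleton hxg, finrank_inf_ker_add_one hv hxv,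
      hg.2]

theorem TotallySingular.mem_joinPerp_iff_sub_mem (hg : TotallySingular Q g) (hv : v ∈ g)
    (hQx : Q x = 0) (hvx : Q.polarBilin v x = 1) (hQy : Q y = 0) (hvy : Q.polarBilin v y = 1) :
    y ∈ joinPerp Q g x ↔ y - x ∈ g := by
  constructor
  · intro hy
    obtain ⟨d, ⟨hdg, -⟩, z, hz, rfl⟩ := Submodule.mem_sup.1 hy
    obtain ⟨c, rfl⟩ := Submodule.mem_span_singleton.1 hz
    have hc : c = 1 := by
      rwa [map_add, hg.polarBilin_eq_zero hv hdg, map_smul, hvx, zero_add, smul_eq_mul,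
        mul_one] at hvy
    rwa [hc, one_smul, add_sub_cancel_right]
  · intro hd
    have hperp : Q.polarBilin x (y - x) = 0 := by
      simp [QuadraticMap.polar, hQx, hQy, hg _ hd]
    exact Submodule.mem_sup.2
      ⟨y - x, ⟨hd, hperp⟩, x, Submodule.mem_span_singleton_self x, sub_add_cancel y x⟩

theorem map_sub_map_smul_eq_zero (hQv : Q v = 0) (hvx : Q.polarBilin v x = 1) :
    Q (x - Q x • v) = 0 := by
  have hxv : QuadraticMap.polar Q x v = 1 := by
    rwa [QuadraticMap.polar_comm]
  simp [sub_eq_add_neg, QuadraticMap.map_add, QuadraticMap.map_smul, hQv, hxv, ← neg_smul]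

end TotallySingular

section RelativeOvoid

variable {Q : QuadraticForm F V} {g H U : Submodule F V} {R : Set (Submodule F V)} {v x : V}
  {m n : ℕ}

theorem IsSingularPoint.map_eq_zero {P : Submodule F V} (hP : IsSingularPoint Q P) (hx : x ∈ P) :
    Q x = 0 := by
  obtain ⟨w, -, hQw, rfl⟩ := hP
  exact totallySingular_span_singleton hQw x hx

theorem IsRelativeMOvoid.ncard_affineReps_eq (hR : IsRelativeMOvoid Q n H m R)
    (hH : ∀ w ∈ U, w ∈ H ↔ Q.polarBilin v w = 0) :
    (affineReps (Q.polarBilin v) {P ∈ R | P ≤ U}).ncard = {P ∈ R | P ≤ U}.ncard := by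
  refine ncard_affineReps fun P ⟨hPR, hPU⟩ => ?_
  obtain ⟨⟨w, -, -, rfl⟩, hPH⟩ := hR.1 P hPR
  rw [Submodule.span_singleton_le_iff_mem] at hPU hPH
  exact ⟨w, fun h => hPH ((hH w hPU).2 h), rfl⟩

theorem IsRelativeMOvoid.ncard_affineReps_coset [FiniteDimensional F V]
    (hR : IsRelativeMOvoid Q n H m R) (hg : IsGenerator Q n g) (hgU : g ≤ U) (hv : v ∈ g)
    (hH : ∀ w ∈ U, w ∈ H ↔ Q.polarBilin v w = 0) (hxU : x ∈ U) (hvx : Q.polarBilin v x = 1) :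
    {y ∈ affineReps (Q.polarBilin v) {P ∈ R | P ≤ U} | y - x ∈ g}.ncard = m := by
  set z := x - Q x • v with hz
  have hQz : Q z = 0 := map_sub_map_smul_eq_zero (hg.1 v hv) hvx
  have hzU : z ∈ U := U.sub_mem hxU (U.smul_mem _ (hgU hv))
  have hvz : Q.polarBilin v z = 1 := by
    rw [hz, map_sub, map_smul, hvx, hg.1.polarBilin_eq_zero hv hv, smul_zero, sub_zero]
  have hle : joinPerp Q g z ≤ U := joinPerp_le hgU hzU
  have hnot : ¬ joinPerp Q g z ≤ H := fun h =>
    one_ne_zero (hvz.symm.trans ((hH z hzU).1 (h mem_joinPerp_self)))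
  have hset : {y ∈ affineReps (Q.polarBilin v) {P ∈ R | P ≤ U} | y - x ∈ g} =
      affineReps (Q.polarBilin v) {P ∈ R | P ≤ joinPerp Q g z} := by
    have hcoset (y : V) (hyR : Submodule.span F {y} ∈ R) (hvy : Q.polarBilin v y = 1) :
        y - x ∈ g ↔ y ∈ joinPerp Q g z := by
      have hQy : Q y = 0 := (hR.1 _ hyR).1.map_eq_zero (Submodule.mem_span_singleton_self y)
      rw [hg.1.mem_joinPerp_iff_sub_mem hv hQz hvz hQy hvy, hz, sub_sub_eq_add_sub,
        add_sub_right_comm, Submodule.add_mem_iff_left g (g.smul_mem _ hv)]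
    ext y
    simp only [affineReps, Set.mem_ofPred_eq, Submodule.span_singleton_le_iff_mem]
    constructor
    · rintro ⟨⟨hvy, hyR, -⟩, hyx⟩
      exact ⟨hvy, hyR, (hcoset y hyR hvy).1 hyx⟩
    · rintro ⟨hvy, hyR, hy⟩
      exact ⟨⟨hvy, hyR, hle hy⟩, (hcoset y hyR hvy).2 hy⟩
  rw [hset, hR.ncard_affineReps_eq fun w hw => hH w (hle hw)]
  exact hR.2 _ (hg.joinPerp hv hQz (hvz ▸ one_ne_zero)) hnot

theorem IsRelativeMOvoid.ncard_mul_card_pow [Finite F] [FiniteDimensional F V]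
    (hR : IsRelativeMOvoid Q n H m R) (hg : IsGenerator Q n g) (hgU : g ≤ U) (hv : v ∈ g)
    (hH : ∀ w ∈ U, w ∈ H ↔ Q.polarBilin v w = 0) (hUH : ¬ U ≤ H) :
    {P ∈ R | P ≤ U}.ncard * Nat.card F ^ (n + 1) = m * Nat.card F ^ finrank F U := by
  have : Finite V := Module.finite_of_finite F
  obtain ⟨w, hwU, hwH⟩ := SetLike.not_le_iff_exists.1 hUH
  have hslice := ncard_affine_slice_mul_card hwU (mt (hH w hwU).2 hwH) 1
  have hcount := ncard_mul_eq_ncard_mul_card_of_cosets g.toAddSubgroup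
    (A := {x | x ∈ U ∧ Q.polarBilin v x = 1})
    (T := affineReps (Q.polarBilin v) {P ∈ R | P ≤ U})
    (fun y hy => ⟨hy.2.2 (Submodule.mem_span_singleton_self y), hy.1⟩)
    (fun x hx d hd => ⟨U.sub_mem hx.1 (hgU hd), by
      rw [map_sub, hx.2, hg.1.polarBilin_eq_zero hv hd, sub_zero]⟩)
    (fun x hx => hR.ncard_affineReps_coset hg hgU hv hH hx.1 hx.2)
  have hcard : Nat.card g.toAddSubgroup = Nat.card F ^ n := by
    rw [← hg.2]
    exact Module.natCard_eq_pow_finrank (K := F) (V := g)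
  rw [hR.ncard_affineReps_eq hH, hcard] at hcount
  rw [pow_succ, ← mul_assoc, ← hcount, ← hslice]
  ring

end RelativeOvoid

theorem statement_4_general [Finite F] [FiniteDimensional F V] {n m : ℕ} {Q : QuadraticForm F V}
    {H H' : Submodule F V} (hH : IsCoatom H) (hH'dim : finrank F H' = 2 * n + 1)
    (hH'nd : NondegOn Q H') (hsec : DegenOn Q (H ⊓ H')) {R : Set (Submodule F V)}
    (hR : IsRelativeMOvoid Q n H m R) :
    {P ∈ R | P ≤ H'}.ncard = m * Nat.card F ^ n := by
  obtain ⟨v, ⟨-, hvH'⟩, hv0, hQv, hperp⟩ := hsec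
  have hvfun : ¬ H' ≤ (Q.polarBilin v).ker := fun h => hv0 (hH'nd v hvH' hQv h)
  have hH_iff : ∀ w ∈ H', w ∈ H ↔ Q.polarBilin v w = 0 := fun w hw =>
    mem_iff_apply_eq_zero_of_isCoatom hH hperp hvfun hw
  have hspan : Submodule.span F {v} < H' := by
    refine lt_of_le_of_ne (by simpa using hvH') fun h => hvfun (h ▸ ?_)
    exact fun w hw => (totallySingular_span_singleton hQv).polarBilin_eq_zero
      (Submodule.mem_span_singleton_self v) hw
  have hn : finrank F (Submodule.span F {v}) ≤ n := by
    have hlt := Submodule.finrank_lt_finrank_of_lt hspan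
    rw [finrank_span_singleton hv0] at hlt ⊢
    omega
  obtain ⟨g, hg, hvg, hgH'⟩ :=
    (totallySingular_span_singleton hQv).exists_generator_ge hspan.le hn hH'dim.ge
  have hcount := hR.ncard_mul_card_pow hg hgH' (by simpa using hvg) hH_iff
    fun h => hvfun fun w hw => (hH_iff w hw).1 (h hw)
  rw [hH'dim, show 2 * n + 1 = n + (n + 1) by omega, pow_add _ n (n + 1), ← mul_assoc] at hcount
  exact Nat.eq_of_mul_eq_mul_right (pow_pos Nat.card_pos _) hcount

/-- If the parabolic section `Q' = Q ∩ H'` meets `𝒬` in a cone, then a relative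
`m`-ovoid has exactly `m·qⁿ` points in `H'`. -/
theorem statement_4
    (q n : ℕ) [Fintype F] (hq : Fintype.card F = q) (hn : 2 ≤ n)
    (hV : finrank F V = 2 * n + 2)
    (Q : QuadraticForm F V) (hQnd : Nondeg Q) (hQw : HasWittIndex Q n)
    (H : Submodule F V) (hH : finrank F H = 2 * n + 1) (hHnd : NondegOn Q H)
    (H' : Submodule F V) (hH'dim : finrank F H' = 2 * n + 1) (hH'nd : NondegOn Q H')
    (hsec : DegenOn Q (H ⊓ H'))
    (m : ℕ) (R : Set (Submodule F V)) (hR : IsRelativeMOvoid Q n H m R) :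
    {P ∈ R | P ≤ H'}.ncard = m * q ^ n := by
  have : FiniteDimensional F V := FiniteDimensional.of_finrank_pos (by omega)
  simpa [hq] using
    statement_4_general (isCoatom_of_finrank_add_one_eq (by omega)) hH'dim hH'nd hsec hR
end
end
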